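/- arXiv:math/0507148 — 6 statements merged into one kernel-verified Lean document; each statement's English description precedes it below -/
import Mathlib

section
/- Let m ≥ 1 and let k₁ ≥ k₂ ≥ ⋯ ≥ k_m be a nonincreasing sequence of integers with k₁ + k₂ + ⋯ + k_m = 0 and k_m ≤ −2. Then d(k) = Σ_{1 ≤ i < j ≤ m} (k_i − k_j − λ_{ij}) ≥ m + 1. -/
/-!
Every pair `i < j` contributes a nonnegative term to `d(k)`, so `d(k)` is bounded below by the
contribution of the pairs `(i, m)`, which is at least
`∑_{i<m} (kᵢ - kₘ - 1) = ∑ᵢ kᵢ - m kₘ - (m - 1)`.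
When `∑ᵢ kᵢ = 0` and `kₘ ≤ -2`, this is at least `2m - (m - 1) = m + 1`.
-/

section StratumCodim

variable {R : Type*} [CommRing R] [LinearOrder R]

/-- The term `a - b - λ` of `d(k)` coming from partial indices `a ≥ b`, where `λ = 1` if `b < a` and
`λ = 0` otherwise. The partial indices of a loop lie in `R = ℤ`. -/
def pairCodim (a b : R) : R :=
  a - b - if b < a then 1 else 0

/-- The codimension `d(k)` of the stratum with partial indices `k 0 ≥ k 1 ≥ ⋯ ≥ k (m - 1)`; only
these first `m` values of `k` matter. -/
def stratumCodim (m : ℕ) (k : ℕ → R) : R :=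
  ∑ i ∈ Finset.range m, ∑ j ∈ Finset.Ico (i + 1) m, pairCodim (k i) (k j)

theorem stratumCodim_succ (n : ℕ) (k : ℕ → R) :
    stratumCodim (n + 1) k =
      stratumCodim n k + ∑ i ∈ Finset.range n, pairCodim (k i) (k n) := by
  unfold stratumCodim
  rw [Finset.sum_range_succ, Finset.Ico_self, Finset.sum_empty, add_zero,
    ← Finset.sum_add_distrib]
  exact Finset.sum_congr rfl fun i hi ↦ Finset.sum_Ico_succ_top (Finset.mem_range.mp hi) _

variable [IsStrictOrderedRing R]

theorem sub_sub_one_le_pairCodim (a b : R) : a - b - 1 ≤ pairCodim a b := by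
  unfold pairCodim
  gcongr
  split_ifs <;> simp

variable [SuccAddOrder R]

theorem pairCodim_nonneg {a b : R} (hba : b ≤ a) : 0 ≤ pairCodim a b := by
  unfold pairCodim
  split_ifs with hlt
  · linarith [Order.add_one_le_of_lt hlt]
  · simpa using hba

theorem stratumCodim_nonneg {m : ℕ} {k : ℕ → R} (hk : AntitoneOn k (Set.Iio m)) :
    0 ≤ stratumCodim m k := by
  refine Finset.sum_nonneg fun i hi ↦ Finset.sum_nonneg fun j hj ↦ pairCodim_nonneg ?_
  obtain ⟨hij, hjm⟩ := Finset.mem_Ico.mp hj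
  exact hk (Finset.mem_range.mp hi) hjm (Nat.le_of_succ_le hij)

theorem stmt_0_general {m : ℕ} (hm : 1 ≤ m) {k : ℕ → R} (hk : AntitoneOn k (Set.Iio m)) :
    ∑ i ∈ Finset.range m, k i - m * k (m - 1) - (m - 1) ≤ stratumCodim m k := by
  obtain ⟨n, rfl⟩ := Nat.exists_eq_add_of_le' hm
  calc ∑ i ∈ Finset.range (n + 1), k i - (n + 1 : ℕ) * k n - ((n + 1 : ℕ) - 1)
    _ = ∑ i ∈ Finset.range n, (k i - k n - 1) := by
      simp only [Finset.sum_range_succ, Finset.sum_sub_distrib, Finset.sum_const,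
        Finset.card_range, nsmul_eq_mul]
      push_cast
      ring
    _ ≤ ∑ i ∈ Finset.range n, pairCodim (k i) (k n) :=
      Finset.sum_le_sum fun i _ ↦ sub_sub_one_le_pairCodim (k i) (k n)
    _ ≤ stratumCodim (n + 1) k := by
      rw [stratumCodim_succ]
      exact le_add_of_nonneg_left <|
        stratumCodim_nonneg <| hk.mono <| Set.Iio_subset_Iio n.le_succ

end StratumCodim

/-- Codimension estimate for strata with some partial index ≤ −2:
if `k` is a nonincreasing sequence of `m ≥ 1` integers summing to `0`
whose last entry is `≤ −2`, then
`d(k) = ∑_{i<j} (kᵢ − kⱼ − λᵢⱼ) ≥ m + 1`, where `λᵢⱼ = 1` if `kᵢ > kⱼ` and `0` otherwise. -/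
theorem stmt_0 (m : ℕ) (hm : 1 ≤ m) (k : ℕ → ℤ)
    (hmono : ∀ i j, i ≤ j → j < m → k j ≤ k i)
    (hsum : ∑ i ∈ Finset.range m, k i = 0)
    (hlast : k (m - 1) ≤ -2) :
    (m : ℤ) + 1 ≤
      ∑ i ∈ Finset.range m, ∑ j ∈ Finset.Ico (i + 1) m,
        (k i - k j - if k j < k i then 1 else 0) := by
  refine le_trans ?_ (stmt_0_general hm fun i _ j hj hij ↦ hmono i j hij hj)
  rw [hsum]
  nlinarith [mul_le_mul_of_nonneg_left hlast (Nat.cast_nonneg (α := ℤ) m)]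
end

section
/- Let (X, 𝒜, μ) be a finite measure space and let C > 0. Let g : X → ℝ and f_l : X → ℝ (l ∈ ℕ) be measurable functions with 0 ≤ f_l ≤ C and 0 ≤ g ≤ C almost everywhere, and ∫_X f_l dμ = ∫_X g dμ for every l. Assume that (i) for every bounded measurable h : X → ℝ, ∫_X f_l·h dμ → ∫_X g·h dμ as l → ∞ (weak convergence of f_l to g), and (ii) limsup_{l→∞} ∫_X f_l·log f_l dμ ≤ ∫_X g·log g dμ, where x·log x is taken to be 0 at x = 0. Then ∫_X (f_l − g)² dμ → 0 as l → ∞, i.e. f_l → g strongly in L²(μ). -/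
open MeasureTheory Filter

/-!
Let `φ` be strictly convex and continuous on a compact convex set, such as `x log x` on `[0, C]`,
and write `J (x, y) = (φ x + φ y) / 2 - φ ((x + y) / 2)`. The midpoints of `f_l` and `g` still
converge weakly to `g`, so weak lower semicontinuity of `u ↦ ∫ φ u` together with the entropy bound
squeezes `∫ J (f_l, g)` to zero. By compactness, strict convexity gives
`‖x - y‖² ≤ ε + A_ε J (x, y)` for every `ε > 0`, which upgrades this to `L²` convergence.

Weak lower semicontinuity rests on approximate subgradients: the slope of `x log x` blows up at `0`,
but up to an error `ε` a subgradient can be chosen continuously, hence boundedly, so that it yields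
an admissible test function.
-/

section Midpoint

variable {E : Type*} [NormedAddCommGroup E] [NormedSpace ℝ E] {K : Set E} {φ : E → ℝ}

/-- The midpoint convexity gap (Jensen gap for two equal weights) of `φ`, which measures how far `φ`
is from being affine between `x` and `y`. -/
noncomputable def midpointGap (φ : E → ℝ) (x y : E) : ℝ :=
  (φ x + φ y) / 2 - φ (midpoint ℝ x y)

theorem midpointGap_nonneg (hφ : ConvexOn ℝ K φ) {x y : E} (hx : x ∈ K) (hy : y ∈ K) :
    0 ≤ midpointGap φ x y := by
  have h := hφ.2 hx hy (by norm_num : (0 : ℝ) ≤ 2⁻¹) (by norm_num : (0 : ℝ) ≤ 2⁻¹) (by norm_num)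
  simp only [smul_eq_mul] at h
  simp only [midpointGap, midpoint_eq_smul_add, smul_add, invOf_eq_inv]
  linarith

theorem eq_of_midpointGap_eq_zero (hφ : StrictConvexOn ℝ K φ) {x y : E} (hx : x ∈ K) (hy : y ∈ K)
    (hxy : midpointGap φ x y = 0) : x = y := by
  by_contra hne
  have h := hφ.2 hx hy hne (by norm_num : (0 : ℝ) < 2⁻¹) (by norm_num : (0 : ℝ) < 2⁻¹)
    (by norm_num)
  simp only [smul_eq_mul] at h
  simp only [midpointGap, midpoint_eq_smul_add, smul_add, invOf_eq_inv] at hxy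
  linarith

theorem continuousOn_midpointGap (hK : Convex ℝ K) (hφ : ContinuousOn φ K) :
    ContinuousOn (fun p : E × E => midpointGap φ p.1 p.2) (K ×ˢ K) := by
  have hfst : ContinuousOn (fun p : E × E => φ p.1) (K ×ˢ K) :=
    hφ.comp continuousOn_fst fun p hp => hp.1
  have hsnd : ContinuousOn (fun p : E × E => φ p.2) (K ×ˢ K) :=
    hφ.comp continuousOn_snd fun p hp => hp.2
  have hmid : ContinuousOn (fun p : E × E => φ (midpoint ℝ p.1 p.2)) (K ×ˢ K) :=
    hφ.comp (by simp only [midpoint_eq_smul_add]; fun_prop) fun p hp => hK.midpoint_mem hp.1 hp.2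
  exact ((hfst.add hsnd).div_const 2).sub hmid

theorem exists_le_add_mul_of_isCompact {α : Type*} [TopologicalSpace α] {S : Set α}
    (hS : IsCompact S) {u v : α → ℝ} (hu : ContinuousOn u S) (hv : ContinuousOn v S)
    (hv_nonneg : ∀ x ∈ S, 0 ≤ v x) (huv : ∀ x ∈ S, v x = 0 → u x ≤ 0) {ε : ℝ} (hε : 0 < ε) :
    ∃ A, ∀ x ∈ S, u x ≤ ε + A * v x := by
  have hpoint : ∀ x ∈ S, ∃ A, u x < ε + A * v x := by
    intro x hx
    rcases (hv_nonneg x hx).eq_or_lt' with hvx | hvx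
    · exact ⟨0, by linarith [huv x hx hvx]⟩
    · refine ⟨u x / v x, ?_⟩
      rw [div_mul_cancel₀ _ hvx.ne']
      linarith
  suffices ∃ A, ∀ x ∈ S, x ∈ S → u x ≤ ε + A * v x by simpa using this
  refine hS.induction_on (p := fun s => ∃ A, ∀ x ∈ s, x ∈ S → u x ≤ ε + A * v x)
    ⟨0, by simp⟩ ?_ ?_ ?_
  · rintro s t hst ⟨A, ht⟩
    exact ⟨A, fun x hx => ht x (hst hx)⟩
  · rintro s t ⟨A, hs⟩ ⟨B, ht⟩
    refine ⟨max A B, fun x hx hxS => ?_⟩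
    have hvx := hv_nonneg x hxS
    rcases hx with hx | hx
    · exact (hs x hx hxS).trans (by gcongr; exact le_max_left A B)
    · exact (ht x hx hxS).trans (by gcongr; exact le_max_right A B)
  · intro x hx
    obtain ⟨A, hlt⟩ := hpoint x hx
    have hev : ∀ᶠ y in nhdsWithin x S, u y < ε + A * v y :=
      (hu x hx).eventually_lt (((hv x hx).const_mul A).const_add ε) hlt
    exact ⟨_, hev, A, fun y hy _ => le_of_lt hy⟩

theorem exists_sq_norm_sub_le_add_mul_midpointGap (hK : IsCompact K) (hφ : StrictConvexOn ℝ K φ)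
    (hφc : ContinuousOn φ K) {ε : ℝ} (hε : 0 < ε) :
    ∃ A, ∀ x ∈ K, ∀ y ∈ K, ‖x - y‖ ^ 2 ≤ ε + A * midpointGap φ x y := by
  obtain ⟨A, hle⟩ := exists_le_add_mul_of_isCompact (hK.prod hK)
    (u := fun p => ‖p.1 - p.2‖ ^ 2) (by fun_prop) (continuousOn_midpointGap hφ.1 hφc)
    (fun p hp => midpointGap_nonneg hφ.convexOn hp.1 hp.2)
    (fun p hp h => by simp [eq_of_midpointGap_eq_zero hφ hp.1 hp.2 h]) hε
  exact ⟨A, fun x hx y hy => hle (x, y) ⟨hx, hy⟩⟩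

theorem ae_midpoint_mem {X : Type*} [MeasurableSpace X] {μ : Measure X} {u v : X → E}
    (hK : Convex ℝ K) (huK : ∀ᵐ x ∂μ, u x ∈ K) (hvK : ∀ᵐ x ∂μ, v x ∈ K) :
    ∀ᵐ x ∂μ, midpoint ℝ (u x) (v x) ∈ K := by
  filter_upwards [huK, hvK] with x hux hvx using hK.midpoint_mem hux hvx

theorem aemeasurable_midpoint {X : Type*} [MeasurableSpace X] {μ : Measure X} {u v : X → E}
    [MeasurableSpace E] [BorelSpace E] [SecondCountableTopology E] (hu : AEMeasurable u μ)
    (hv : AEMeasurable v μ) : AEMeasurable (fun x => midpoint ℝ (u x) (v x)) μ := by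
  simp only [midpoint_eq_smul_add]
  fun_prop

end Midpoint

section ApproximateSubgradient

theorem exists_continuousMap_approx_subgradient {E : Type*} [NormedAddCommGroup E]
    [NormedSpace ℝ E] {K : Set E} {φ : E → ℝ} (hK : IsClosed K) (hφ : ConvexOn ℝ K φ)
    (hφc : ContinuousOn φ K) {ε : ℝ} (hε : 0 < ε) :
    ∃ s : C(K, StrongDual ℝ E), ∀ x y : K, φ x + s x (y - x) - ε ≤ φ y := by
  let t : K → Set (StrongDual ℝ E) := fun x => {L | ∀ y : K, φ x + L (y - x) - ε ≤ φ y}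
  have ht : ∀ x, Convex ℝ (t x) := by
    intro x L hL L' hL' a b ha hb hab y
    calc φ x + (a • L + b • L') (y - x) - ε
        = a * (φ x + L (y - x) - ε) + b * (φ x + L' (y - x) - ε) := by
          simp only [add_apply, smul_apply, smul_eq_mul]
          linear_combination (ε - φ x) * hab
      _ ≤ a * φ y + b * φ y := by gcongr; exacts [hL y, hL' y]
      _ = φ y := by rw [← add_mul, hab, one_mul]
  refine exists_continuous_forall_mem_convex_of_local_const ht fun x => ?_
  obtain ⟨L, c, hle, heq⟩ := hφ.exists_affine_le_of_lt (𝕜 := ℝ) x.2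
    (sub_lt_self (φ x) (half_pos hε)) hK hφc.lowerSemicontinuousOn
  have hφK : Continuous fun z : K => φ z := hφc.domRestrict
  have hlt : φ x - L x < c + ε := by
    have : L x + c = φ x - ε / 2 := heq
    linarith
  have hcont : Continuous fun z : K => φ z - L z :=
    hφK.sub (L.continuous.comp continuous_subtype_val)
  refine ⟨L, ?_⟩
  filter_upwards [hcont.continuousAt.eventually_lt_const hlt] with z hz y
  have : L y + c ≤ φ y := hle y
  rw [map_sub]
  linarith

variable {E : Type*} [NormedAddCommGroup E] [InnerProductSpace ℝ E] [CompleteSpace E]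
  [MeasurableSpace E] [BorelSpace E] {K : Set E} {φ : E → ℝ}

open scoped RealInnerProductSpace

theorem exists_measurable_bounded_approx_subgradient (hK : IsCompact K) (hφ : ConvexOn ℝ K φ)
    (hφc : ContinuousOn φ K) {ε : ℝ} (hε : 0 < ε) :
    ∃ s : E → E, Measurable s ∧ (∃ M : ℝ, ∀ x, ‖s x‖ ≤ M) ∧
      ∀ x ∈ K, ∀ y ∈ K, φ x + ⟪y - x, s x⟫ - ε ≤ φ y := by
  obtain ⟨s, hs⟩ := exists_continuousMap_approx_subgradient hK.isClosed hφ hφc hε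
  let v : K → E := fun x => (InnerProductSpace.toDual ℝ E).symm (s x)
  have hv : Continuous v := (InnerProductSpace.toDual ℝ E).symm.continuous.comp s.continuous
  have : CompactSpace K := isCompact_iff_compactSpace.1 hK
  obtain ⟨M, hM⟩ := isCompact_univ.exists_bound_of_continuousOn hv.continuousOn
  have hval (x : K) : Function.extend Subtype.val v 0 x = v x :=
    Subtype.val_injective.extend_apply v 0 x
  refine ⟨Function.extend Subtype.val v 0,
    (MeasurableEmbedding.subtype_coe hK.measurableSet).measurable_extend hv.measurable
      measurable_zero, ⟨max M 0, fun x => ?_⟩, fun x hx y hy => ?_⟩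
  · by_cases hx : x ∈ K
    · exact (hval ⟨x, hx⟩ ▸ hM ⟨x, hx⟩ (Set.mem_univ _)).trans (le_max_left M 0)
    · rw [Function.extend_apply' _ _ _ (by simpa using hx)]
      simp
  · rw [hval ⟨x, hx⟩, real_inner_comm, InnerProductSpace.toDual_symm_apply]
    exact hs ⟨x, hx⟩ ⟨y, hy⟩

end ApproximateSubgradient

section Integrability

variable {X E : Type*} [MeasurableSpace X] {μ : Measure X} [IsFiniteMeasure μ]
  [NormedAddCommGroup E] [MeasurableSpace E] [BorelSpace E] {K : Set E} {φ : E → ℝ} {u : X → E}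

theorem integrable_of_ae_mem_isCompact [SecondCountableTopology E] (hK : IsCompact K)
    (hu : AEMeasurable u μ) (huK : ∀ᵐ x ∂μ, u x ∈ K) : Integrable u μ := by
  obtain ⟨M, hM⟩ := hK.exists_bound_of_continuousOn continuousOn_id
  exact .of_bound hu.aestronglyMeasurable M (huK.mono fun x hx => hM (u x) hx)

theorem integrable_comp_of_ae_mem_isCompact (hK : IsCompact K) (hφ : ContinuousOn φ K)
    (hu : AEMeasurable u μ) (huK : ∀ᵐ x ∂μ, u x ∈ K) : Integrable (fun x => φ (u x)) μ := by
  obtain ⟨M, hM⟩ := hK.exists_bound_of_continuousOn hφ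
  have hφm : AEMeasurable φ (μ.map u) := by
    rw [← Measure.restrict_eq_self_of_ae_mem
      ((ae_map_iff hu hK.measurableSet).2 huK : ∀ᵐ y ∂μ.map u, y ∈ K)]
    exact hφ.aemeasurable hK.measurableSet
  exact .of_bound (hφm.comp_aemeasurable hu).aestronglyMeasurable M
    (huK.mono fun x hx => hM (u x) hx)

variable [NormedSpace ℝ E] [SecondCountableTopology E] {v : X → E}

theorem integrable_midpointGap (hK : IsCompact K) (hKc : Convex ℝ K)
    (hφ : ContinuousOn φ K) (hu : AEMeasurable u μ) (huK : ∀ᵐ x ∂μ, u x ∈ K)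
    (hv : AEMeasurable v μ) (hvK : ∀ᵐ x ∂μ, v x ∈ K) :
    Integrable (fun x => midpointGap φ (u x) (v x)) μ :=
  (((integrable_comp_of_ae_mem_isCompact hK hφ hu huK).add
    (integrable_comp_of_ae_mem_isCompact hK hφ hv hvK)).div_const 2).sub
    (integrable_comp_of_ae_mem_isCompact hK hφ (aemeasurable_midpoint hu hv)
      (ae_midpoint_mem hKc huK hvK))

theorem integral_midpointGap (hK : IsCompact K) (hKc : Convex ℝ K)
    (hφ : ContinuousOn φ K) (hu : AEMeasurable u μ) (huK : ∀ᵐ x ∂μ, u x ∈ K)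
    (hv : AEMeasurable v μ) (hvK : ∀ᵐ x ∂μ, v x ∈ K) :
    ∫ x, midpointGap φ (u x) (v x) ∂μ
      = (∫ x, φ (u x) ∂μ + ∫ x, φ (v x) ∂μ) / 2 - ∫ x, φ (midpoint ℝ (u x) (v x)) ∂μ := by
  have hφu := integrable_comp_of_ae_mem_isCompact hK hφ hu huK
  have hφv := integrable_comp_of_ae_mem_isCompact hK hφ hv hvK
  have hφmid := integrable_comp_of_ae_mem_isCompact hK hφ (aemeasurable_midpoint hu hv)
    (ae_midpoint_mem hKc huK hvK)
  have hsum : Integrable (fun x => φ (u x) + φ (v x)) μ := hφu.add hφv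
  simp only [midpointGap]
  rw [integral_sub (hsum.div_const 2) hφmid, integral_div, integral_add hφu hφv]

end Integrability

section WeakConvergence

open scoped RealInnerProductSpace Topology

variable {X E ι : Type*} [MeasurableSpace X] {μ : Measure X} {l : Filter ι}
  [NormedAddCommGroup E] [InnerProductSpace ℝ E] [MeasurableSpace E] {K : Set E}
  {φ : E → ℝ} {f : ι → X → E} {g : X → E}

/-- Weak `L¹` convergence of `f i` to `g` along `l`, tested against everywhere bounded measurable
functions. -/
def TendstoWeakly (μ : Measure X) (l : Filter ι) (f : ι → X → E) (g : X → E) : Prop :=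
  ∀ h : X → E, Measurable h → (∃ M : ℝ, ∀ x, ‖h x‖ ≤ M) →
    Tendsto (fun i => ∫ x, ⟪f i x, h x⟫ ∂μ) l (𝓝 (∫ x, ⟪g x, h x⟫ ∂μ))

variable [BorelSpace E] [SecondCountableTopology E]

theorem integrable_inner_of_bounded {u h : X → E} (hu : Integrable u μ) (hh : Measurable h)
    (hb : ∃ M : ℝ, ∀ x, ‖h x‖ ≤ M) : Integrable (fun x => ⟪u x, h x⟫) μ := by
  obtain ⟨M, hM⟩ := hb
  refine (hu.norm.mul_const M).mono' (hu.1.inner hh.aestronglyMeasurable) (ae_of_all _ fun x => ?_)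
  exact (norm_inner_le_norm _ _).trans (mul_le_mul_of_nonneg_left (hM x) (norm_nonneg _))

theorem TendstoWeakly.midpoint_right (h : TendstoWeakly μ l f g) (hf : ∀ i, Integrable (f i) μ)
    (hg : Integrable g μ) : TendstoWeakly μ l (fun i x => midpoint ℝ (f i x) (g x)) g := by
  intro k hk hb
  have hmid (i : ι) : ∫ x, ⟪midpoint ℝ (f i x) (g x), k x⟫ ∂μ
      = (∫ x, ⟪f i x, k x⟫ ∂μ + ∫ x, ⟪g x, k x⟫ ∂μ) / 2 := by
    rw [← integral_add (integrable_inner_of_bounded (hf i) hk hb)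
      (integrable_inner_of_bounded hg hk hb), ← integral_div]
    refine integral_congr_ae (ae_of_all _ fun x => ?_)
    simp only [midpoint_eq_smul_add, real_inner_smul_left, inner_add_left, invOf_eq_inv]
    ring
  simpa only [hmid, add_self_div_two] using
    ((h k hk hb).add_const (∫ x, ⟪g x, k x⟫ ∂μ)).div_const 2

variable [CompleteSpace E] [IsFiniteMeasure μ]

theorem eventually_lt_integral_comp_of_tendstoWeakly (hK : IsCompact K) (hφ : ConvexOn ℝ K φ)
    (hφc : ContinuousOn φ K) (hf : ∀ i, AEMeasurable (f i) μ) (hfK : ∀ i, ∀ᵐ x ∂μ, f i x ∈ K)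
    (hg : AEMeasurable g μ) (hgK : ∀ᵐ x ∂μ, g x ∈ K) (hfg : TendstoWeakly μ l f g) {a : ℝ}
    (ha : a < ∫ x, φ (g x) ∂μ) : ∀ᶠ i in l, a < ∫ x, φ (f i x) ∂μ := by
  set m := μ.real Set.univ
  obtain ⟨ε, hε, hεa⟩ : ∃ ε > 0, (m + 1) * ε < ∫ x, φ (g x) ∂μ - a :=
    exists_pos_mul_lt (sub_pos.2 ha) _
  obtain ⟨s, hs, ⟨M, hM⟩, hsub⟩ := exists_measurable_bounded_approx_subgradient hK hφ hφc hε
  set h : X → E := s ∘ hg.mk g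
  have hh : Measurable h := hs.comp hg.measurable_mk
  have hb : ∃ M : ℝ, ∀ x, ‖h x‖ ≤ M := ⟨M, fun x => hM _⟩
  have hφg := integrable_comp_of_ae_mem_isCompact hK hφc hg hgK
  have hgh := integrable_inner_of_bounded (integrable_of_ae_mem_isCompact hK hg hgK) hh hb
  filter_upwards [(hfg h hh hb).eventually_const_lt (sub_lt_self _ hε)] with i hi
  have hφf := integrable_comp_of_ae_mem_isCompact hK hφc (hf i) (hfK i)
  have hfh := integrable_inner_of_bounded
    (integrable_of_ae_mem_isCompact hK (hf i) (hfK i)) hh hb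
  have htangent : Integrable (fun x => φ (g x) + (⟪f i x, h x⟫ - ⟪g x, h x⟫)) μ :=
    hφg.add (hfh.sub hgh)
  have hlower : ∫ x, (φ (g x) + (⟪f i x, h x⟫ - ⟪g x, h x⟫) - ε) ∂μ ≤ ∫ x, φ (f i x) ∂μ := by
    refine integral_mono_ae (htangent.sub (integrable_const ε)) hφf ?_
    filter_upwards [hfK i, hgK, hg.ae_eq_mk] with x hfx hgx hgmk
    simpa only [h, Function.comp_apply, ← hgmk, ← inner_sub_left] using hsub _ hgx _ hfx
  have hexpand : ∫ x, (φ (g x) + (⟪f i x, h x⟫ - ⟪g x, h x⟫) - ε) ∂μ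
      = ∫ x, φ (g x) ∂μ + (∫ x, ⟪f i x, h x⟫ ∂μ - ∫ x, ⟪g x, h x⟫ ∂μ) - m * ε := by
    rw [integral_sub htangent (integrable_const ε), integral_add hφg (by fun_prop),
      integral_sub hfh hgh, integral_const, smul_eq_mul]
  linarith

theorem tendsto_integral_midpointGap_zero (hK : IsCompact K) (hφ : ConvexOn ℝ K φ)
    (hφc : ContinuousOn φ K) (hf : ∀ i, AEMeasurable (f i) μ) (hfK : ∀ i, ∀ᵐ x ∂μ, f i x ∈ K)
    (hg : AEMeasurable g μ) (hgK : ∀ᵐ x ∂μ, g x ∈ K) (hfg : TendstoWeakly μ l f g)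
    (hent : limsup (fun i => ∫ x, φ (f i x) ∂μ) l ≤ ∫ x, φ (g x) ∂μ) :
    Tendsto (fun i => ∫ x, midpointGap φ (f i x) (g x) ∂μ) l (𝓝 0) := by
  obtain ⟨M, hM⟩ := hK.exists_bound_of_continuousOn hφc
  have hbdd : IsBoundedUnder (· ≤ ·) l fun i => ∫ x, φ (f i x) ∂μ :=
    isBoundedUnder_of ⟨M * μ.real Set.univ, fun i => (le_abs_self _).trans
      (norm_integral_le_of_norm_le_const ((hfK i).mono fun x hx => hM _ hx))⟩
  have hmid : TendstoWeakly μ l (fun i x => midpoint ℝ (f i x) (g x)) g :=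
    hfg.midpoint_right (fun i => integrable_of_ae_mem_isCompact hK (hf i) (hfK i))
      (integrable_of_ae_mem_isCompact hK hg hgK)
  refine tendsto_order.2 ⟨fun a ha => .of_forall fun i => ha.trans_le ?_, fun a ha => ?_⟩
  · refine integral_nonneg_of_ae ?_
    filter_upwards [hfK i, hgK] with x hfx hgx using midpointGap_nonneg hφ hfx hgx
  · filter_upwards [eventually_lt_of_limsup_lt (hent.trans_lt (lt_add_of_pos_right _ ha)) hbdd,
      eventually_lt_integral_comp_of_tendstoWeakly hK hφ hφc
        (fun i => aemeasurable_midpoint (hf i) hg) (fun i => ae_midpoint_mem hφ.1 (hfK i) hgK)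
        hg hgK hmid (sub_lt_self _ (half_pos ha))] with i hupper hlower
    rw [integral_midpointGap hK hφ.1 hφc (hf i) (hfK i) hg hgK]
    linarith

/-- A form of Visintin's theorem: strict convexity upgrades weak convergence to strong
convergence. -/
theorem stmt_5_general (hK : IsCompact K) (hφ : StrictConvexOn ℝ K φ) (hφc : ContinuousOn φ K)
    (hf : ∀ i, AEMeasurable (f i) μ) (hfK : ∀ i, ∀ᵐ x ∂μ, f i x ∈ K)
    (hg : AEMeasurable g μ) (hgK : ∀ᵐ x ∂μ, g x ∈ K) (hfg : TendstoWeakly μ l f g)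
    (hent : limsup (fun i => ∫ x, φ (f i x) ∂μ) l ≤ ∫ x, φ (g x) ∂μ) :
    Tendsto (fun i => ∫ x, ‖f i x - g x‖ ^ 2 ∂μ) l (𝓝 0) := by
  have hgap := tendsto_integral_midpointGap_zero hK hφ.convexOn hφc hf hfK hg hgK hfg hent
  set m := μ.real Set.univ
  refine tendsto_order.2 ⟨fun a ha => .of_forall fun i =>
    ha.trans_le (integral_nonneg fun x => sq_nonneg _), fun a ha => ?_⟩
  obtain ⟨ε, hε, hεa⟩ : ∃ ε > 0, m * ε < a := exists_pos_mul_lt ha m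
  obtain ⟨A, hA⟩ := exists_sq_norm_sub_le_add_mul_midpointGap hK hφ hφc hε
  have hlim : Tendsto (fun i => m * ε + A * ∫ x, midpointGap φ (f i x) (g x) ∂μ) l
      (𝓝 (m * ε)) := by
    simpa using (hgap.const_mul A).const_add (m * ε)
  filter_upwards [hlim.eventually_lt_const hεa] with i hi
  have hgapi := integrable_midpointGap hK hφ.1 hφc (hf i) (hfK i) hg hgK
  calc ∫ x, ‖f i x - g x‖ ^ 2 ∂μ
      ≤ ∫ x, (ε + A * midpointGap φ (f i x) (g x)) ∂μ := by
        refine integral_mono_of_nonneg (ae_of_all _ fun x => sq_nonneg _)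
          ((integrable_const ε).add (hgapi.const_mul A)) ?_
        filter_upwards [hfK i, hgK] with x hfx hgx using hA _ hfx _ hgx
    _ = m * ε + A * ∫ x, midpointGap φ (f i x) (g x) ∂μ := by
        rw [integral_add (integrable_const ε) (hgapi.const_mul A), integral_const,
          integral_const_mul, smul_eq_mul]
    _ < a := hi

end WeakConvergence

/-- Strong convergence lemma for volume forms: on a finite measure space, if
`0 ≤ f_l ≤ C`, `0 ≤ g ≤ C` a.e., all `f_l` have the same integral as `g`,
`f_l → g` weakly (against every bounded measurable test function), and
`limsup ∫ f_l log f_l ≤ ∫ g log g`, then `f_l → g` strongly in `L²`. -/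
theorem stmt_5 {X : Type*} [MeasurableSpace X] (μ : Measure X) [IsFiniteMeasure μ]
    (C : ℝ) (hC : 0 < C) (g : X → ℝ) (f : ℕ → X → ℝ)
    (hgm : Measurable g) (hfm : ∀ l, Measurable (f l))
    (hfb : ∀ l, ∀ᵐ x ∂μ, 0 ≤ f l x ∧ f l x ≤ C)
    (hgb : ∀ᵐ x ∂μ, 0 ≤ g x ∧ g x ≤ C)
    (hint : ∀ l, ∫ x, f l x ∂μ = ∫ x, g x ∂μ)
    (hweak : ∀ h : X → ℝ, Measurable h → (∃ M : ℝ, ∀ x, |h x| ≤ M) →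
      Tendsto (fun l => ∫ x, f l x * h x ∂μ) atTop (nhds (∫ x, g x * h x ∂μ)))
    (hent : limsup (fun l => ∫ x, f l x * Real.log (f l x) ∂μ) atTop
        ≤ ∫ x, g x * Real.log (g x) ∂μ) :
    Tendsto (fun l => ∫ x, (f l x - g x) ^ 2 ∂μ) atTop (nhds 0) := by
  have hweak' : TendstoWeakly μ atTop f g := fun h hh hb => by
    simpa only [Real.inner_apply] using hweak h hh hb
  simpa only [Real.norm_eq_abs, sq_abs] using stmt_5_general isCompact_Icc
    (Real.strictConvexOn_mul_log.subset Set.Icc_subset_Ici_self (convex_Icc 0 C))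
    Real.continuous_mul_log.continuousOn (fun l => (hfm l).aemeasurable) hfb hgm.aemeasurable hgb
    hweak' hent
end

section
/- Let A, B ∈ ℝ and C ≥ 0. Suppose that for every real number l ≥ 1 there exists a function E : ℝ² → ℝ such that, writing R_l = [−l, l] × [0, 1]: (i) E is continuously differentiable on a neighborhood of R_l and |E(s,t)| ≤ C for all (s,t) ∈ R_l; (ii) E(s,0) = A and E(s,1) = B for all s ∈ [−l, l]; (iii) ∂E/∂t(s,0) = 0 for all s ∈ [−l, l]; (iv) E is weakly subharmonic on the interior of R_l, i.e. ∫_{R_l} E·(∂²φ/∂s² + ∂²φ/∂t²) ds dt ≥ 0 for every nonnegative smooth function φ compactly supported in (−l, l) × (0, 1). Then B ≥ A. -/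
open Set

open Asymptotics Filter MeasureTheory
open scoped Topology Convolution

/-!
Average `E` over `s` against a cutoff `κ` of total mass `1` supported in `(-l, l)`. Testing weak
subharmonicity against products `κ(s) ψ(t)` and bounding the term that carries `κ''` shows that the
average `F(t) = ∫ κ(s) E(s, t) ds` satisfies `F'' ≥ -M` weakly, where `M = C ∫ |κ''| = O(C / l²)`.
Hence `F(t) + M t² / 2` is convex. By the Neumann condition its derivative vanishes at `0`, so
`A = F(0) ≤ F(1) + M / 2 = B + M / 2`. Let `l → ∞`.
-/

section Convexity

/-- Convexity in the sense of distributions of a function on a set of real numbers. The test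
functions are supported in the interior of the set, so its boundary does not matter. -/
def WeaklyConvexOn (f : ℝ → ℝ) (S : Set ℝ) : Prop :=
  ∀ ψ : ℝ → ℝ, ContDiff ℝ (⊤ : ℕ∞) ψ → (∀ t, 0 ≤ ψ t) → tsupport ψ ⊆ interior S →
    0 ≤ ∫ t in S, f t * deriv (deriv ψ) t

theorem convexOn_closure_of_continuousOn {V : Type*} [AddCommGroup V] [Module ℝ V]
    [TopologicalSpace V] [IsTopologicalAddGroup V] [ContinuousSMul ℝ V] {s : Set V} {f : V → ℝ}
    (hf : ConvexOn ℝ s f) (hcont : ContinuousOn f (closure s)) : ConvexOn ℝ (closure s) f := by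
  refine ⟨hf.1.closure, fun x hx y hy p q hp hq hpq => ?_⟩
  have hcombo : MapsTo (fun z : V × V => p • z.1 + q • z.2) (closure s ×ˢ closure s) (closure s) :=
    fun z hz => hf.1.closure hz.1 hz.2 hp hq hpq
  have hxy : (x, y) ∈ closure (s ×ˢ s) := by rw [closure_prod_eq]; exact ⟨hx, hy⟩
  refine le_on_closure (f := fun z => f (p • z.1 + q • z.2)) (g := fun z => p • f z.1 + q • f z.2)
    (fun z hz => hf.2 hz.1 hz.2 hp hq hpq) ?_ ?_ hxy <;> rw [closure_prod_eq]
  · exact hcont.comp (by fun_prop) hcombo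
  · exact ((hcont.comp continuousOn_fst mapsTo_fst_prod).const_smul p).add
      ((hcont.comp continuousOn_snd mapsTo_snd_prod).const_smul q)

theorem convexOn_of_tendsto {ι V : Type*} [AddCommGroup V] [Module ℝ V] {l : Filter ι} [l.NeBot]
    {F : ι → V → ℝ} {D : ι → Set V} {f : V → ℝ} {s : Set V} (hs : Convex ℝ s)
    (hF : ∀ i, ConvexOn ℝ (D i) (F i)) (hD : ∀ x ∈ s, ∀ᶠ i in l, x ∈ D i)
    (hlim : ∀ x ∈ s, Tendsto (fun i => F i x) l (𝓝 (f x))) : ConvexOn ℝ s f := by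
  refine ⟨hs, fun x hx y hy p q hp hq hpq => ?_⟩
  refine le_of_tendsto_of_tendsto (hlim _ (hs hx hy hp hq hpq))
    (((hlim x hx).const_smul p).add ((hlim y hy).const_smul q)) ?_
  filter_upwards [hD x hx, hD y hy] with i hxi hyi
  exact (hF i).2 hxi hyi hp hq hpq

theorem convexOn_convolution {φ g : ℝ → ℝ} {D : Set ℝ} (hD : Convex ℝ D)
    (hφ : ContDiff ℝ 2 φ) (hφc : HasCompactSupport φ) (hg : LocallyIntegrable g)
    (hnonneg : ∀ x ∈ D, 0 ≤ ∫ t, deriv (deriv φ) (x - t) * g t) :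
    ConvexOn ℝ D (φ ⋆[.lsmul ℝ ℝ] g) := by
  have hφ' : ContDiff ℝ 1 (deriv φ) := hφ.deriv'
  have h₁ := hφc.hasDerivAt_convolution_left (.lsmul ℝ ℝ) (hφ.of_le one_le_two) hg
  have h₂ := hφc.deriv.hasDerivAt_convolution_left (.lsmul ℝ ℝ) hφ' hg
  have hd₁ : deriv (φ ⋆[.lsmul ℝ ℝ] g) = deriv φ ⋆[.lsmul ℝ ℝ] g := funext fun x => (h₁ x).deriv
  refine convexOn_of_deriv2_nonneg' hD (fun x _ => (h₁ x).differentiableAt.differentiableWithinAt)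
    (fun x _ => ?_) fun x hx => ?_
  · rw [hd₁]
    exact (h₂ x).differentiableAt.differentiableWithinAt
  · rw [Function.iterate_succ_apply, Function.iterate_one, hd₁, (h₂ x).deriv,
      convolution_lsmul_swap]
    exact hnonneg x hx

theorem WeaklyConvexOn.convexOn_convolution {f φ : ℝ → ℝ} {S D : Set ℝ} (hf : WeaklyConvexOn f S)
    (hS : MeasurableSet S) (hfS : IntegrableOn f S) (hφ : ContDiff ℝ (⊤ : ℕ∞) φ)
    (hφc : HasCompactSupport φ) (hφ₀ : ∀ t, 0 ≤ φ t) (hD : Convex ℝ D)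
    (hDS : ∀ x ∈ D, ∀ t, x - t ∈ tsupport φ → t ∈ interior S) :
    ConvexOn ℝ D (φ ⋆[.lsmul ℝ ℝ] S.indicator f) := by
  refine _root_.convexOn_convolution hD (hφ.of_le ENat.LEInfty.out) hφc
    (hfS.integrable_indicator hS).locallyIntegrable fun x hx => ?_
  have hderiv : deriv (deriv fun t => φ (x - t)) = fun t => deriv (deriv φ) (x - t) := by
    ext t
    simp only [funext fun t => deriv_comp_const_sub (f := φ) x t, deriv.fun_neg,
      deriv_comp_const_sub, neg_neg]
  have hweak := hf (fun t => φ (x - t)) (hφ.comp (contDiff_const.sub contDiff_id))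
    (fun t => hφ₀ _) fun t ht => hDS x hx t
      (tsupport_comp_subset_preimage φ (f := fun t => x - t) (by fun_prop) ht)
  rw [hderiv, ← integral_indicator hS] at hweak
  simpa only [indicator_mul_left, mul_comm] using hweak

theorem WeaklyConvexOn.convexOn_Ioo {f : ℝ → ℝ} {a b : ℝ} (hf : WeaklyConvexOn f (Icc a b))
    (hcont : ContinuousOn f (Icc a b)) : ConvexOn ℝ (Ioo a b) f := by
  let φ (n : ℕ) : ContDiffBump (0 : ℝ) :=
    ⟨1 / (n + 2), 1 / (n + 1), by positivity, by gcongr; norm_num⟩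
  have hφ : Tendsto (fun n => (φ n).rOut) atTop (𝓝 0) := tendsto_one_div_add_atTop_nhds_zero_nat
  refine convexOn_of_tendsto (l := atTop) (D := fun n => Ioo (a + (φ n).rOut) (b - (φ n).rOut))
    (F := fun n => (φ n).normed volume ⋆[.lsmul ℝ ℝ] (Icc a b).indicator f) (convex_Ioo a b)
    (fun n => ?_) (fun x hx => ?_) fun x hx => ?_
  · refine hf.convexOn_convolution measurableSet_Icc hcont.integrableOn_Icc (φ n).contDiff_normed
      (φ n).hasCompactSupport_normed (φ n).nonneg_normed (convex_Ioo _ _) fun x hx t ht => ?_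
    rw [(φ n).tsupport_normed_eq, mem_closedBall_zero_iff, Real.norm_eq_abs, abs_le] at ht
    rw [interior_Icc]
    exact ⟨by linarith [hx.1], by linarith [hx.2]⟩
  · filter_upwards [hφ.eventually_lt_const (sub_pos.2 hx.1),
      hφ.eventually_lt_const (sub_pos.2 hx.2)] with n ha hb
    exact ⟨by linarith, by linarith⟩
  · have hIcc : Icc a b ∈ 𝓝 x := Icc_mem_nhds hx.1 hx.2
    have hx_lim : Tendsto ((Icc a b).indicator f) (𝓝 x) (𝓝 (f x)) :=
      (hcont.continuousAt hIcc).tendsto.congr' (eqOn_indicator.symm.eventuallyEq_of_mem hIcc)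
    have hmeas : AEStronglyMeasurable ((Icc a b).indicator f) :=
      (hcont.integrableOn_Icc.integrable_indicator measurableSet_Icc).aestronglyMeasurable
    exact ContDiffBump.convolution_tendsto_right hφ
      (.of_forall fun _ => hmeas)
      (hx_lim.comp tendsto_snd) tendsto_const_nhds

theorem WeaklyConvexOn.convexOn_Icc {f : ℝ → ℝ} {a b : ℝ} (hab : a ≠ b)
    (hf : WeaklyConvexOn f (Icc a b)) (hcont : ContinuousOn f (Icc a b)) :
    ConvexOn ℝ (Icc a b) f := by
  rw [← closure_Ioo hab] at hcont ⊢
  exact convexOn_closure_of_continuousOn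
    (hf.convexOn_Ioo (hcont.mono (closure_Ioo hab).ge)) hcont

theorem integral_mul_deriv_deriv_eq {u u' u'' ψ : ℝ → ℝ} (hu : ∀ t, HasDerivAt u (u' t) t)
    (hu' : ∀ t, HasDerivAt u' (u'' t) t) (hu'' : Continuous u'') (hψ : ContDiff ℝ 2 ψ)
    (hψc : HasCompactSupport ψ) : ∫ t, u t * deriv (deriv ψ) t = ∫ t, u'' t * ψ t := by
  have cu : Continuous u := continuous_iff_continuousAt.2 fun t => (hu t).continuousAt
  have cu' : Continuous u' := continuous_iff_continuousAt.2 fun t => (hu' t).continuousAt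
  have hψ' : ContDiff ℝ 1 (deriv ψ) := hψ.deriv'
  have integrable_mul {v w : ℝ → ℝ} (hv : Continuous v) (hw : Continuous w)
      (hwc : HasCompactSupport w) : Integrable (v * w) :=
    (hv.mul hw).integrable_of_hasCompactSupport hwc.mul_left
  rw [integral_mul_deriv_eq_deriv_mul_of_integrable (fun t _ => hu t)
      (fun t _ => (hψ'.differentiable one_ne_zero t).hasDerivAt)
      (integrable_mul cu hψ'.continuous_deriv_one hψc.deriv.deriv)
      (integrable_mul cu' hψ'.continuous hψc.deriv) (integrable_mul cu hψ'.continuous hψc.deriv),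
    integral_mul_deriv_eq_deriv_mul_of_integrable (fun t _ => hu' t)
      (fun t _ => (hψ.differentiable two_ne_zero t).hasDerivAt)
      (integrable_mul cu' hψ'.continuous hψc.deriv) (integrable_mul hu'' hψ.continuous hψc)
      (integrable_mul cu' hψ.continuous hψc), neg_neg]

theorem weaklyConvexOn_add_sq {f : ℝ → ℝ} {a b M : ℝ} (hf : ContinuousOn f (Icc a b))
    (hweak : ∀ ψ : ℝ → ℝ, ContDiff ℝ (⊤ : ℕ∞) ψ → (∀ t, 0 ≤ ψ t) → tsupport ψ ⊆ Ioo a b →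
      -(M * ∫ t in Icc a b, ψ t) ≤ ∫ t in Icc a b, f t * deriv (deriv ψ) t) :
    WeaklyConvexOn (fun t => f t + M / 2 * (t - a) ^ 2) (Icc a b) := by
  intro ψ hψ hψ₀ hψs
  rw [interior_Icc] at hψs
  have hψs' : tsupport ψ ⊆ Icc a b := hψs.trans Ioo_subset_Icc_self
  have hψ'' : Continuous (deriv (deriv ψ)) :=
    ((hψ.of_le (m := 2) ENat.LEInfty.out).deriv' (n := 1)).continuous_deriv_one
  have hquad : ∫ t in Icc a b, M / 2 * (t - a) ^ 2 * deriv (deriv ψ) t =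
      M * ∫ t in Icc a b, ψ t := by
    rw [setIntegral_eq_integral_of_forall_compl_eq_zero fun t ht => ?_,
      setIntegral_eq_integral_of_forall_compl_eq_zero fun t ht => ?_, ← integral_const_mul]
    · refine integral_mul_deriv_deriv_eq (u' := fun t => M * (t - a)) (fun t => ?_) (fun t => ?_)
        continuous_const (hψ.of_le ENat.LEInfty.out)
        (isCompact_Icc.of_isClosed_subset (isClosed_tsupport ψ) hψs')
      · exact ((((hasDerivAt_id t).sub_const a).pow 2).const_mul (M / 2)).congr_deriv
          (by simp only [id]; ring)
      · simpa using ((hasDerivAt_id t).sub_const a).const_mul M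
    · exact image_eq_zero_of_notMem_tsupport fun h => ht (hψs' h)
    · rw [image_eq_zero_of_notMem_tsupport fun h =>
        ht (hψs' (tsupport_deriv_subset (tsupport_deriv_subset h))), mul_zero]
  simp only [add_mul]
  rw [integral_add (ContinuousOn.integrableOn_Icc (by fun_prop))
    (Continuous.integrableOn_Icc (by fun_prop)), hquad]
  linarith [hweak ψ hψ hψ₀ hψs]

end Convexity

section ParametricIntegral

theorem eventually_norm_sub_sub_smul_le_of_isCompact {X G : Type*} [TopologicalSpace X]
    [NormedAddCommGroup G] [NormedSpace ℝ G] {k : Set X} (hk : IsCompact k) {I : Set ℝ}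
    (hI : Convex ℝ I) {f f' : ℝ → X → G} (hf' : ContinuousOn f'.uncurry (I ×ˢ k))
    (hderiv : ∀ t ∈ I, ∀ x ∈ k, HasDerivWithinAt (f · x) (f' t x) I t) {t₀ : ℝ} (ht₀ : t₀ ∈ I)
    {ε : ℝ} (hε : 0 < ε) :
    ∀ᶠ t in 𝓝[I] t₀, ∀ x ∈ k, ‖f t x - f t₀ x - (t - t₀) • f' t₀ x‖ ≤ ε * ‖t - t₀‖ := by
  obtain ⟨v, hv, hvε⟩ := hk.mem_uniformity_of_prod hf' ht₀ (Metric.dist_mem_uniformity hε)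
  obtain ⟨δ, hδ, hδv⟩ := Metric.mem_nhdsWithin_iff.1 hv
  filter_upwards [inter_mem_nhdsWithin I (Metric.ball_mem_nhds t₀ hδ)] with t ht x hx
  have hmean := Convex.norm_image_sub_le_of_norm_hasDerivWithin_le
    (f := fun t => f t x - t • f' t₀ x) (f' := fun t => f' t x - f' t₀ x) (C := ε)
    (s := I ∩ Metric.ball t₀ δ) (x := t₀) (y := t) (fun τ hτ => ?_) (fun τ hτ => ?_)
    (hI.inter (convex_ball t₀ δ)) ⟨ht₀, Metric.mem_ball_self hδ⟩ ht
  · convert hmean using 2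
    rw [sub_smul]
    abel
  · have hlinear := (hasDerivWithinAt_id τ (I ∩ Metric.ball t₀ δ)).smul_const (f' t₀ x)
    rw [one_smul] at hlinear
    exact ((hderiv τ hτ.1 x hx).mono inter_subset_left).sub hlinear
  · rw [← dist_eq_norm]
    exact (hvε τ (hδv hτ.symm) x hx).le

theorem hasDerivWithinAt_setIntegral_of_continuousOn {X G : Type*} [TopologicalSpace X] [T2Space X]
    [MeasurableSpace X] [OpensMeasurableSpace X] {μ : Measure X} [IsFiniteMeasureOnCompacts μ]
    [NormedAddCommGroup G] [NormedSpace ℝ G] {k : Set X} (hk : IsCompact k) {I : Set ℝ}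
    (hI : Convex ℝ I) {f f' : ℝ → X → G} (hf : ∀ t ∈ I, IntegrableOn (f t) k μ)
    (hf' : ContinuousOn f'.uncurry (I ×ˢ k))
    (hderiv : ∀ t ∈ I, ∀ x ∈ k, HasDerivWithinAt (f · x) (f' t x) I t) {t₀ : ℝ} (ht₀ : t₀ ∈ I) :
    HasDerivWithinAt (fun t => ∫ x in k, f t x ∂μ) (∫ x in k, f' t₀ x ∂μ) I t₀ := by
  rw [hasDerivWithinAt_iff_isLittleO, Asymptotics.isLittleO_iff]
  intro ε hε
  have hμ : 0 < μ.real k + 1 := by positivity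
  have hf't₀ : IntegrableOn (f' t₀) k μ :=
    (hf'.comp (Continuous.prodMk_right t₀).continuousOn
      fun x hx => ⟨ht₀, hx⟩).integrableOn_compact' hk hk.measurableSet
  filter_upwards [eventually_norm_sub_sub_smul_le_of_isCompact hk hI hf' hderiv ht₀
    (div_pos hε hμ), self_mem_nhdsWithin] with t ht htI
  rw [← integral_smul, ← integral_sub (hf t htI) (hf t₀ ht₀),
    ← integral_sub (f := fun x => f t x - f t₀ x) (g := fun x => (t - t₀) • f' t₀ x)
      ((hf t htI).sub (hf t₀ ht₀)) (hf't₀.smul _)]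
  calc ‖∫ x in k, (f t x - f t₀ x - (t - t₀) • f' t₀ x) ∂μ‖
      ≤ ε / (μ.real k + 1) * ‖t - t₀‖ * μ.real k :=
        norm_setIntegral_le_of_norm_le_const hk.measure_lt_top ht
    _ ≤ ε / (μ.real k + 1) * ‖t - t₀‖ * (μ.real k + 1) := by gcongr; linarith
    _ = ε * ‖t - t₀‖ := by field_simp

end ParametricIntegral

section Cutoff

/-- The cutoffs are the rescalings `s ↦ η (s / l) / l` of a fixed normed bump `η` on `(-1, 1)`. -/
theorem exists_cutoff_integral_abs_deriv_deriv_eq : ∃ K : ℝ, ∀ l : ℝ, 0 < l → ∃ κ : ℝ → ℝ,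
    ContDiff ℝ (⊤ : ℕ∞) κ ∧ (∀ s, 0 ≤ κ s) ∧ tsupport κ ⊆ Ioo (-l) l ∧
      ∫ s, κ s = 1 ∧ ∫ s, |deriv (deriv κ) s| = K / l ^ 2 := by
  let b : ContDiffBump (0 : ℝ) := ⟨1 / 3, 1 / 2, by norm_num, by norm_num⟩
  let η := b.normed volume
  refine ⟨∫ s, |deriv (deriv η) s|, fun l hl => ⟨fun s => l⁻¹ * η (l⁻¹ * s),
    contDiff_const.mul (b.contDiff_normed.comp (contDiff_const.mul contDiff_id)),
    fun s => mul_nonneg (inv_nonneg.2 hl.le) (b.nonneg_normed _), fun s hs => ?_, ?_, ?_⟩⟩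
  · have hs' : l⁻¹ * s ∈ Metric.closedBall 0 b.rOut := b.tsupport_normed_eq (μ := volume) ▸
      tsupport_comp_subset_preimage η (f := fun s => l⁻¹ * s) (by fun_prop)
        (tsupport_mul_subset_right hs)
    rw [mem_closedBall_zero_iff, Real.norm_eq_abs, abs_mul, abs_of_pos (inv_pos.2 hl),
      inv_mul_le_iff₀ hl] at hs'
    have hrOut : l * b.rOut < l := by simp only [b]; linarith
    exact abs_lt.1 (hs'.trans_lt hrOut)
  · rw [integral_const_mul, Measure.integral_comp_inv_mul_left, b.integral_normed, abs_of_pos hl,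
      smul_eq_mul, mul_one, inv_mul_cancel₀ hl.ne']
  · have hderiv (g : ℝ → ℝ) (c : ℝ) :
        deriv (fun s => c * g (l⁻¹ * s)) = fun s => c * l⁻¹ * deriv g (l⁻¹ * s) := by
      ext s
      rw [deriv_const_mul_field, deriv_comp_mul_left, smul_eq_mul, mul_assoc]
    simp only [hderiv, abs_mul, abs_of_pos (inv_pos.2 hl)]
    rw [integral_const_mul, Measure.integral_comp_inv_mul_left (fun s => |deriv (deriv η) s|),
      abs_of_pos hl, smul_eq_mul]
    field_simp

end Cutoff

section Plane

/-- The Laplacian `∂²φ/∂s² + ∂²φ/∂t²` of a function on the plane `ℝ × ℝ`, whose norm does not come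
from an inner product. -/
noncomputable def planeLaplacian (φ : ℝ × ℝ → ℝ) (p : ℝ × ℝ) : ℝ :=
  fderiv ℝ (fun q => fderiv ℝ φ q (1, 0)) p (1, 0) +
    fderiv ℝ (fun q => fderiv ℝ φ q (0, 1)) p (0, 1)

/-- Subharmonicity in the sense of distributions of a function on a set in the plane. The test
functions are supported in the interior of the set, so its boundary does not matter. -/
def WeaklySubharmonicOn (E : ℝ × ℝ → ℝ) (R : Set (ℝ × ℝ)) : Prop :=
  ∀ φ : ℝ × ℝ → ℝ, ContDiff ℝ (⊤ : ℕ∞) φ → (∀ p, 0 ≤ φ p) → tsupport φ ⊆ interior R →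
    0 ≤ ∫ p in R, E p * planeLaplacian φ p

theorem tsupport_fst_mul_snd_subset (κ ψ : ℝ → ℝ) :
    tsupport (fun q : ℝ × ℝ => κ q.1 * ψ q.2) ⊆ tsupport κ ×ˢ tsupport ψ :=
  closure_minimal (fun _ hq => ⟨subset_tsupport κ (left_ne_zero_of_mul hq),
    subset_tsupport ψ (right_ne_zero_of_mul hq)⟩) ((isClosed_tsupport κ).prod (isClosed_tsupport ψ))

theorem fderiv_fst_mul_snd {κ ψ : ℝ → ℝ} (hκ : Differentiable ℝ κ) (hψ : Differentiable ℝ ψ)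
    (p v : ℝ × ℝ) : fderiv ℝ (fun q : ℝ × ℝ => κ q.1 * ψ q.2) p v =
      v.1 * (deriv κ p.1 * ψ p.2) + v.2 * (κ p.1 * deriv ψ p.2) := by
  have hκp : HasFDerivAt (fun q : ℝ × ℝ => κ q.1) _ p :=
    (hκ p.1).hasDerivAt.hasFDerivAt.comp p hasFDerivAt_fst
  have hψp : HasFDerivAt (fun q : ℝ × ℝ => ψ q.2) _ p :=
    (hψ p.2).hasDerivAt.hasFDerivAt.comp p hasFDerivAt_snd
  rw [(hκp.fun_mul hψp).fderiv]
  simp only [add_apply, smul_apply,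
    ContinuousLinearMap.comp_apply, ContinuousLinearMap.coe_fst', ContinuousLinearMap.coe_snd',
    ContinuousLinearMap.toSpanSingleton_apply, smul_eq_mul]
  ring

theorem planeLaplacian_fst_mul_snd {κ ψ : ℝ → ℝ} (hκ : ContDiff ℝ 2 κ) (hψ : ContDiff ℝ 2 ψ)
    (p : ℝ × ℝ) : planeLaplacian (fun q => κ q.1 * ψ q.2) p =
      deriv (deriv κ) p.1 * ψ p.2 + κ p.1 * deriv (deriv ψ) p.2 := by
  have dκ := hκ.differentiable two_ne_zero
  have dψ := hψ.differentiable two_ne_zero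
  have dκ' := (hκ.deriv' (n := 1)).differentiable one_ne_zero
  have dψ' := (hψ.deriv' (n := 1)).differentiable one_ne_zero
  simp only [planeLaplacian, fderiv_fst_mul_snd dκ dψ, one_mul, zero_mul, add_zero, zero_add,
    fderiv_fst_mul_snd dκ' dψ, fderiv_fst_mul_snd dκ dψ']

theorem integrableOn_mul_fst_mul_snd {E : ℝ × ℝ → ℝ} {u v : ℝ → ℝ} {a b c d : ℝ}
    (hE : ContinuousOn E (Icc a b ×ˢ Icc c d)) (hu : Continuous u) (hv : Continuous v) :
    IntegrableOn (fun p : ℝ × ℝ => E p * (u p.1 * v p.2)) (Icc a b ×ˢ Icc c d) :=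
  (hE.mul (Continuous.continuousOn (by fun_prop))).integrableOn_compact
    (isCompact_Icc.prod isCompact_Icc)

theorem setIntegral_mul_fst_mul_snd_le {E : ℝ × ℝ → ℝ} {u ψ : ℝ → ℝ} {a b c d C : ℝ}
    (hE : ContinuousOn E (Icc a b ×ˢ Icc c d)) (hC : ∀ p ∈ Icc a b ×ˢ Icc c d, |E p| ≤ C)
    (hu : Continuous u) (hψ : Continuous ψ) (hψ₀ : ∀ t, 0 ≤ ψ t) :
    ∫ p in Icc a b ×ˢ Icc c d, E p * (u p.1 * ψ p.2) ≤
      C * (∫ s in Icc a b, |u s|) * ∫ t in Icc c d, ψ t := by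
  rw [mul_assoc, ← setIntegral_prod_mul, ← Measure.volume_eq_prod, ← integral_const_mul]
  refine setIntegral_mono_on (integrableOn_mul_fst_mul_snd hE hu hψ)
    (integrableOn_mul_fst_mul_snd continuousOn_const hu.abs hψ)
    (measurableSet_Icc.prod measurableSet_Icc) fun p hp => ?_
  calc E p * (u p.1 * ψ p.2)
      ≤ |E p| * |u p.1 * ψ p.2| := (le_abs_self _).trans_eq (abs_mul _ _)
    _ = |E p| * (|u p.1| * ψ p.2) := by rw [abs_mul, abs_of_nonneg (hψ₀ _)]
    _ ≤ C * (|u p.1| * ψ p.2) :=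
      mul_le_mul_of_nonneg_right (hC p hp) (mul_nonneg (abs_nonneg _) (hψ₀ _))

theorem setIntegral_mul_fst_mul_snd_eq {E : ℝ × ℝ → ℝ} {κ w : ℝ → ℝ} {a b c d : ℝ}
    (hE : ContinuousOn E (Icc a b ×ˢ Icc c d)) (hκ : Continuous κ) (hw : Continuous w) :
    ∫ p in Icc a b ×ˢ Icc c d, E p * (κ p.1 * w p.2) =
      ∫ t in Icc c d, (∫ s in Icc a b, κ s * E (s, t)) * w t := by
  have hint := integrableOn_mul_fst_mul_snd hE hκ hw
  rw [IntegrableOn, Measure.volume_eq_prod, ← Measure.prod_restrict] at hint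
  rw [Measure.volume_eq_prod, ← Measure.prod_restrict, integral_prod_symm _ hint]
  refine integral_congr_ae (.of_forall fun t => ?_)
  dsimp only
  rw [← integral_mul_const]
  exact integral_congr_ae (.of_forall fun s => by ring)

/-- Against `κ ⊗ ψ`, the part of the Laplacian along `s` costs at most `C ∫ |κ''|`. -/
theorem WeaklySubharmonicOn.neg_mul_integral_le {E : ℝ × ℝ → ℝ} {κ ψ : ℝ → ℝ} {a b c d C : ℝ}
    (hsub : WeaklySubharmonicOn E (Icc a b ×ˢ Icc c d))
    (hE : ContinuousOn E (Icc a b ×ˢ Icc c d)) (hC : ∀ p ∈ Icc a b ×ˢ Icc c d, |E p| ≤ C)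
    (hκ : ContDiff ℝ (⊤ : ℕ∞) κ) (hκ₀ : ∀ s, 0 ≤ κ s) (hκs : tsupport κ ⊆ Ioo a b)
    (hψ : ContDiff ℝ (⊤ : ℕ∞) ψ) (hψ₀ : ∀ t, 0 ≤ ψ t) (hψs : tsupport ψ ⊆ Ioo c d) :
    -(C * (∫ s in Icc a b, |deriv (deriv κ) s|) * ∫ t in Icc c d, ψ t) ≤
      ∫ t in Icc c d, (∫ s in Icc a b, κ s * E (s, t)) * deriv (deriv ψ) t := by
  have hκ₂ : ContDiff ℝ 2 κ := hκ.of_le ENat.LEInfty.out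
  have hψ₂ : ContDiff ℝ 2 ψ := hψ.of_le ENat.LEInfty.out
  have hκ'' : Continuous (deriv (deriv κ)) := (hκ₂.deriv' (n := 1)).continuous_deriv_one
  have hψ'' : Continuous (deriv (deriv ψ)) := (hψ₂.deriv' (n := 1)).continuous_deriv_one
  have hsupp : tsupport (fun q : ℝ × ℝ => κ q.1 * ψ q.2) ⊆ interior (Icc a b ×ˢ Icc c d) := by
    rw [interior_prod_eq, interior_Icc, interior_Icc]
    exact (tsupport_fst_mul_snd_subset κ ψ).trans (prod_mono hκs hψs)
  have hpos := hsub (fun q => κ q.1 * ψ q.2) (by fun_prop)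
    (fun p => mul_nonneg (hκ₀ _) (hψ₀ _)) hsupp
  simp only [planeLaplacian_fst_mul_snd hκ₂ hψ₂, mul_add] at hpos
  rw [integral_add (integrableOn_mul_fst_mul_snd hE hκ'' hψ.continuous)
    (integrableOn_mul_fst_mul_snd hE hκ.continuous hψ''),
    setIntegral_mul_fst_mul_snd_eq hE hκ.continuous hψ''] at hpos
  linarith [setIntegral_mul_fst_mul_snd_le hE hC hκ'' hψ.continuous hψ₀]

theorem WeaklySubharmonicOn.setIntegral_mul_le {E E' : ℝ × ℝ → ℝ} {κ : ℝ → ℝ} {a b c d C : ℝ}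
    (hcd : c < d) (hsub : WeaklySubharmonicOn E (Icc a b ×ˢ Icc c d))
    (hE : ContinuousOn E (Icc a b ×ˢ Icc c d)) (hC : ∀ p ∈ Icc a b ×ˢ Icc c d, |E p| ≤ C)
    (hderiv : ∀ s ∈ Icc a b, ∀ t ∈ Icc c d,
      HasDerivWithinAt (fun t => E (s, t)) (E' (s, t)) (Icc c d) t)
    (hE' : ContinuousOn E' (Icc a b ×ˢ Icc c d)) (hneumann : ∀ s ∈ Icc a b, E' (s, c) = 0)
    (hκ : ContDiff ℝ (⊤ : ℕ∞) κ) (hκ₀ : ∀ s, 0 ≤ κ s) (hκs : tsupport κ ⊆ Ioo a b) :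
    ∫ s in Icc a b, κ s * E (s, c) ≤ (∫ s in Icc a b, κ s * E (s, d)) +
      C * (∫ s in Icc a b, |deriv (deriv κ) s|) / 2 * (d - c) ^ 2 := by
  set F : ℝ → ℝ := fun t => ∫ s in Icc a b, κ s * E (s, t)
  set M := C * ∫ s in Icc a b, |deriv (deriv κ) s|
  have hc : c ∈ Icc c d := left_mem_Icc.2 hcd.le
  have hκc : Continuous κ := hκ.continuous
  have hF (t : ℝ) (ht : t ∈ Icc c d) :
      HasDerivWithinAt F (∫ s in Icc a b, κ s * E' (s, t)) (Icc c d) t := by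
    refine hasDerivWithinAt_setIntegral_of_continuousOn (f := fun t s => κ s * E (s, t))
      (f' := fun t s => κ s * E' (s, t)) isCompact_Icc (convex_Icc c d) (fun t ht => ?_) ?_
      (fun t ht s hs => (hderiv s hs t ht).const_mul (κ s)) ht
    · exact (hκc.continuousOn.mul
        (hE.comp (Continuous.prodMk_left t).continuousOn fun s hs => ⟨hs, ht⟩)).integrableOn_Icc
    · exact (hκc.comp continuous_snd).continuousOn.mul
        (hE'.comp continuous_swap.continuousOn fun p hp => ⟨hp.2, hp.1⟩)
  have hFcont : ContinuousOn F (Icc c d) := fun t ht => (hF t ht).continuousWithinAt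
  have hF'c : ∫ s in Icc a b, κ s * E' (s, c) = 0 :=
    setIntegral_eq_zero_of_forall_eq_zero fun s hs => by rw [hneumann s hs, mul_zero]
  have hconvex : ConvexOn ℝ (Icc c d) fun t => F t + M / 2 * (t - c) ^ 2 :=
    (weaklyConvexOn_add_sq hFcont fun ψ => hsub.neg_mul_integral_le hE hC hκ hκ₀ hκs).convexOn_Icc
      hcd.ne (hFcont.add (by fun_prop))
  have hderiv_c : HasDerivWithinAt (fun t => F t + M / 2 * (t - c) ^ 2) 0 (Icc c d) c :=
    ((hF c hc).fun_add ((((hasDerivWithinAt_id c (Icc c d)).sub_const c).fun_pow 2).const_mul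
      (M / 2))).congr_deriv (by simp [hF'c])
  have hslope := hconvex.le_slope_of_hasDerivWithinAt hc (right_mem_Icc.2 hcd.le) hcd hderiv_c
  rw [slope_def_field, le_div_iff₀ (sub_pos.2 hcd)] at hslope
  simpa using hslope

end Plane

section Strip

/-- A weakly subharmonic function on the rectangle `[-l, l] × [0, 1]` that is bounded by `C`, is
`C¹` in the vertical variable up to the boundary, has constant values `A` on the bottom edge and `B`
on the top edge, and satisfies the homogeneous Neumann condition on the bottom edge, stated with
the one-sided vertical derivative. -/
structure IsNeumannSubsolution (A B C l : ℝ) (E : ℝ × ℝ → ℝ) : Prop where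
  continuousOn : ContinuousOn E (Icc (-l) l ×ˢ Icc 0 1)
  differentiableOn_vertical :
    ∀ s ∈ Icc (-l) l, DifferentiableOn ℝ (fun t => E (s, t)) (Icc 0 1)
  continuousOn_derivWithin_vertical :
    ContinuousOn (fun p => derivWithin (fun t => E (p.1, t)) (Icc 0 1) p.2) (Icc (-l) l ×ˢ Icc 0 1)
  abs_le : ∀ p ∈ Icc (-l) l ×ˢ Icc 0 1, |E p| ≤ C
  bottom_eq : ∀ s ∈ Icc (-l) l, E (s, 0) = A
  top_eq : ∀ s ∈ Icc (-l) l, E (s, 1) = B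
  neumann : ∀ s ∈ Icc (-l) l, derivWithin (fun t => E (s, t)) (Icc 0 1) 0 = 0
  weaklySubharmonicOn : WeaklySubharmonicOn E (Icc (-l) l ×ˢ Icc 0 1)

theorem hasDerivWithinAt_vertical {E : ℝ × ℝ → ℝ} {s t : ℝ} (hE : DifferentiableAt ℝ E (s, t))
    (S : Set ℝ) : HasDerivWithinAt (fun t => E (s, t)) (fderiv ℝ E (s, t) (0, 1)) S t :=
  (hE.hasFDerivAt.comp_hasDerivAt t
    ((hasDerivAt_const t s).prodMk (hasDerivAt_id t))).hasDerivWithinAt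

theorem IsNeumannSubsolution.of_contDiffOn {A B C l : ℝ} {E : ℝ × ℝ → ℝ} {U : Set (ℝ × ℝ)}
    (hU : IsOpen U) (hRU : Icc (-l) l ×ˢ Icc 0 1 ⊆ U) (hE : ContDiffOn ℝ 1 E U)
    (hC : ∀ p ∈ Icc (-l) l ×ˢ Icc 0 1, |E p| ≤ C) (hA : ∀ s ∈ Icc (-l) l, E (s, 0) = A)
    (hB : ∀ s ∈ Icc (-l) l, E (s, 1) = B)
    (hneumann : ∀ s ∈ Icc (-l) l, fderiv ℝ E (s, 0) (0, 1) = 0)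
    (hsub : WeaklySubharmonicOn E (Icc (-l) l ×ˢ Icc 0 1)) : IsNeumannSubsolution A B C l E := by
  have hderiv (s : ℝ) (hs : s ∈ Icc (-l) l) (t : ℝ) (ht : t ∈ Icc (0 : ℝ) 1) :
      HasDerivWithinAt (fun t => E (s, t)) (fderiv ℝ E (s, t) (0, 1)) (Icc 0 1) t :=
    hasDerivWithinAt_vertical ((hE.differentiableOn one_ne_zero).differentiableAt
      (hU.mem_nhds (hRU ⟨hs, ht⟩))) _
  have hderivWithin (s : ℝ) (hs : s ∈ Icc (-l) l) (t : ℝ) (ht : t ∈ Icc (0 : ℝ) 1) :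
      derivWithin (fun t => E (s, t)) (Icc 0 1) t = fderiv ℝ E (s, t) (0, 1) :=
    (hderiv s hs t ht).derivWithin (uniqueDiffOn_Icc_zero_one t ht)
  refine ⟨hE.continuousOn.mono hRU, fun s hs t ht => (hderiv s hs t ht).differentiableWithinAt,
    ?_, hC, hA, hB, fun s hs => ?_, hsub⟩
  · exact (((hE.continuousOn_fderiv_of_isOpen hU le_rfl).mono hRU).clm_apply
      continuousOn_const).congr fun p hp => hderivWithin p.1 hp.1 p.2 hp.2
  · rw [hderivWithin s hs 0 unitInterval.zero_mem, hneumann s hs]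

theorem IsNeumannSubsolution.le_add_integral {A B C l : ℝ} {E : ℝ × ℝ → ℝ} {κ : ℝ → ℝ}
    (hE : IsNeumannSubsolution A B C l E) (hκ : ContDiff ℝ (⊤ : ℕ∞) κ)
    (hκ₀ : ∀ s, 0 ≤ κ s) (hκs : tsupport κ ⊆ Ioo (-l) l) (hκ₁ : ∫ s, κ s = 1) :
    A ≤ B + C * (∫ s, |deriv (deriv κ) s|) / 2 := by
  have hsupp {s : ℝ} (h : s ∉ Icc (-l) l) : s ∉ tsupport κ :=
    fun hs => h (Ioo_subset_Icc_self (hκs hs))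
  have hcmp := hE.weaklySubharmonicOn.setIntegral_mul_le one_pos hE.continuousOn hE.abs_le
    (fun s hs t ht => (hE.differentiableOn_vertical s hs t ht).hasDerivWithinAt)
    hE.continuousOn_derivWithin_vertical hE.neumann hκ hκ₀ hκs
  have haverage {y c : ℝ} (h : ∀ s ∈ Icc (-l) l, E (s, y) = c) :
      ∫ s in Icc (-l) l, κ s * E (s, y) = c := by
    rw [setIntegral_congr_fun measurableSet_Icc fun s hs => by rw [h s hs], integral_mul_const,
      setIntegral_eq_integral_of_forall_compl_eq_zero fun s hs =>
        image_eq_zero_of_notMem_tsupport (hsupp hs), hκ₁, one_mul]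
  rw [haverage hE.bottom_eq, haverage hE.top_eq,
    setIntegral_eq_integral_of_forall_compl_eq_zero fun s hs => by
      rw [image_eq_zero_of_notMem_tsupport fun h =>
        hsupp hs (tsupport_deriv_subset (tsupport_deriv_subset h)), abs_zero]] at hcmp
  simpa using hcmp

theorem IsNeumannSubsolution.exists_forall_le : ∃ K : ℝ, ∀ {A B C l : ℝ} {E : ℝ × ℝ → ℝ},
    0 < l → IsNeumannSubsolution A B C l E → A ≤ B + C / l ^ 2 * K := by
  obtain ⟨K, hK⟩ := exists_cutoff_integral_abs_deriv_deriv_eq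
  refine ⟨K / 2, fun {A B C l E} hl hE => ?_⟩
  obtain ⟨κ, hκ, hκ₀, hκs, hκ₁, hκ₂⟩ := hK l hl
  refine (hE.le_add_integral hκ hκ₀ hκs hκ₁).trans_eq ?_
  rw [hκ₂]
  ring

end Strip

theorem stmt_7_general {A B : ℝ} {C : ℝ → ℝ} (hC : C =o[atTop] fun l => l ^ 2)
    (h : ∃ᶠ l in atTop, ∃ E, IsNeumannSubsolution A B (C l) l E) : A ≤ B := by
  obtain ⟨K, hK⟩ := IsNeumannSubsolution.exists_forall_le
  have hlim : Tendsto (fun l => B + C l / l ^ 2 * K) atTop (𝓝 B) := by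
    simpa only [zero_mul, add_zero] using (hC.tendsto_div_nhds_zero.mul_const K).const_add B
  refine ge_of_tendsto_of_frequently hlim ((h.and_eventually (eventually_gt_atTop 0)).mono ?_)
  rintro l ⟨⟨E, hE⟩, hl⟩
  exact hK hl hE

/-- Abstract form of minimality of the K-energy at a critical boundary value:
if for every `l ≥ 1` there is a bounded `C¹` function `E` on (a neighborhood of)
the rectangle `R_l = [−l,l] × [0,1]`, equal to `A` on the bottom edge and to `B`
on the top edge, with vanishing normal derivative on the bottom edge, and weakly
subharmonic in the interior, then `B ≥ A`. -/
theorem stmt_7 (A B C : ℝ) (hC : 0 ≤ C)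
    (h : ∀ l : ℝ, 1 ≤ l → ∃ (E : ℝ × ℝ → ℝ) (U : Set (ℝ × ℝ)),
      IsOpen U ∧ (Icc (-l) l ×ˢ Icc (0:ℝ) 1) ⊆ U ∧
      ContDiffOn ℝ 1 E U ∧
      (∀ p ∈ Icc (-l) l ×ˢ Icc (0:ℝ) 1, |E p| ≤ C) ∧
      (∀ s ∈ Icc (-l) l, E (s, 0) = A) ∧
      (∀ s ∈ Icc (-l) l, E (s, 1) = B) ∧
      (∀ s ∈ Icc (-l) l, fderiv ℝ E (s, 0) (0, 1) = 0) ∧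
      (∀ φ : ℝ × ℝ → ℝ, ContDiff ℝ (⊤ : ℕ∞) φ → (∀ p, 0 ≤ φ p) →
        tsupport φ ⊆ Ioo (-l) l ×ˢ Ioo (0:ℝ) 1 →
        0 ≤ ∫ p in Icc (-l) l ×ˢ Icc (0:ℝ) 1,
          E p * (fderiv ℝ (fun q => fderiv ℝ φ q (1, 0)) p (1, 0)
               + fderiv ℝ (fun q => fderiv ℝ φ q (0, 1)) p (0, 1)))) :
    A ≤ B := by
  have hCo : (fun _ => C) =o[atTop] fun l : ℝ => l ^ 2 := isLittleO_const_left.2 <| .inr <|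
    tendsto_norm_atTop_atTop.comp (tendsto_pow_atTop two_ne_zero)
  refine stmt_7_general hCo ((eventually_ge_atTop 1).mono fun l hl => ?_).frequently
  obtain ⟨E, U, hU, hRU, hE, hEC, hA, hB, hneumann, hsub⟩ := h l hl
  refine ⟨E, .of_contDiffOn hU hRU hE hEC hA hB hneumann fun φ hφ hφ₀ hφs => ?_⟩
  rw [interior_prod_eq, interior_Icc, interior_Icc] at hφs
  exact hsub φ hφ hφ₀ hφs
end

section
/- There exists a constant c₀ > 0 with the following property. For all real numbers l ≥ 1 and C ≥ 0 and every function E : ℝ² → ℝ that is twice continuously differentiable on a neighborhood of R_l = [−l, l] × [0, 1] and satisfies: ΔE := ∂²E/∂s² + ∂²E/∂t² ≥ 0 on R_l, |E| ≤ C on R_l, and ∂E/∂t(s,0) = ∂E/∂t(s,1) = 0 for all s ∈ [−l, l]; one has ∫_{[−l/2, l/2] × [0,1]} ΔE ds dt ≤ c₀·C / l. -/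
open Set

/-!
Let `χ(s) = (l² - s²)²`, which vanishes to second order at `s = ±l`. Together with the Neumann
condition on the horizontal edges this removes every boundary term from Green's second identity for
`χ(s)` and `E`, leaving `∫ χ ΔE = ∫ χ'' E`. Since `ΔE ≥ 0`, the left side controls
`(l² - r²)² ∫ ΔE` over the part with `|s| ≤ r`, while `|χ''| ≤ 8 l²` bounds the right side by
`8 l² · C` times the area.
-/

open MeasureTheory

section GreenField

variable {V : Type*} [NormedAddCommGroup V] [NormedSpace ℝ V] {u v : V → ℝ} {p : V}

theorem contDiffAt_fderiv_apply {m n : WithTop ℕ∞} (hu : ContDiffAt ℝ n u p) (hmn : m + 1 ≤ n)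
    (e : V) : ContDiffAt ℝ m (fun q => fderiv ℝ u q e) p :=
  (hu.fderiv_right hmn).clm_apply contDiffAt_const

/-- The component `u ∂ₑv - v ∂ₑu` in the direction `e` of the vector field `u ∇v - v ∇u`, whose
divergence is `u Δv - v Δu`. -/
noncomputable def greenField (u v : V → ℝ) (e p : V) : ℝ :=
  u p * fderiv ℝ v p e - v p * fderiv ℝ u p e

theorem greenField_eq_zero_of_eq_zero {e : V} (hu : u p = 0) (hdu : fderiv ℝ u p e = 0) :
    greenField u v e p = 0 := by
  simp [greenField, hu, hdu]

theorem greenField_eq_zero_of_fderiv_eq_zero {e : V} (hdu : fderiv ℝ u p e = 0)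
    (hdv : fderiv ℝ v p e = 0) : greenField u v e p = 0 := by
  simp [greenField, hdu, hdv]

theorem differentiableAt_greenField (hu : ContDiffAt ℝ 2 u p) (hv : ContDiffAt ℝ 2 v p) (e : V) :
    DifferentiableAt ℝ (greenField u v e) p :=
  ((hu.differentiableAt two_ne_zero).mul
      ((contDiffAt_fderiv_apply hv le_rfl e).differentiableAt one_ne_zero)).sub
    ((hv.differentiableAt two_ne_zero).mul
      ((contDiffAt_fderiv_apply hu le_rfl e).differentiableAt one_ne_zero))

theorem fderiv_greenField_apply (hu : ContDiffAt ℝ 2 u p) (hv : ContDiffAt ℝ 2 v p) (e : V) :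
    fderiv ℝ (greenField u v e) p e =
      u p * fderiv ℝ (fun q => fderiv ℝ v q e) p e -
        v p * fderiv ℝ (fun q => fderiv ℝ u q e) p e := by
  have hdu := (hu.differentiableAt two_ne_zero).hasFDerivAt
  have hdv := (hv.differentiableAt two_ne_zero).hasFDerivAt
  have hddu := ((contDiffAt_fderiv_apply hu le_rfl e).differentiableAt one_ne_zero).hasFDerivAt
  have hddv := ((contDiffAt_fderiv_apply hv le_rfl e).differentiableAt one_ne_zero).hasFDerivAt
  have hfield : HasFDerivAt (greenField u v e) _ p := (hdu.mul hddv).sub (hdv.mul hddu)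
  rw [hfield.fderiv]
  simp only [sub_apply, add_apply, smul_apply, smul_eq_mul]
  ring

end GreenField

/-- The Laplacian `∂²u/∂s² + ∂²u/∂t²` of a function on `ℝ × ℝ`. `Laplacian.laplacian`
does not apply, as `ℝ × ℝ` carries the supremum norm. -/
noncomputable def planarLaplacian (u : ℝ × ℝ → ℝ) (p : ℝ × ℝ) : ℝ :=
  fderiv ℝ (fun q => fderiv ℝ u q (1, 0)) p (1, 0) +
    fderiv ℝ (fun q => fderiv ℝ u q (0, 1)) p (0, 1)

theorem continuousAt_planarLaplacian {u : ℝ × ℝ → ℝ} {p : ℝ × ℝ} (hu : ContDiffAt ℝ 2 u p) :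
    ContinuousAt (planarLaplacian u) p := by
  have continuousAt_second_deriv (e : ℝ × ℝ) :
      ContinuousAt (fun q => fderiv ℝ (fun q' => fderiv ℝ u q' e) q e) p :=
    (contDiffAt_fderiv_apply (m := 0) (contDiffAt_fderiv_apply (m := 1) hu le_rfl e)
      (zero_add 1).le e).continuousAt
  exact (continuousAt_second_deriv _).add (continuousAt_second_deriv _)

theorem integral_mul_planarLaplacian_sub_eq_boundary {u v : ℝ × ℝ → ℝ} {a b : ℝ × ℝ} (hab : a ≤ b)
    (hu : ∀ p ∈ Icc a b, ContDiffAt ℝ 2 u p) (hv : ∀ p ∈ Icc a b, ContDiffAt ℝ 2 v p) :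
    ∫ p in Icc a b, (u p * planarLaplacian v p - v p * planarLaplacian u p) =
      (∫ s in a.1..b.1, greenField u v (0, 1) (s, b.2)) -
          (∫ s in a.1..b.1, greenField u v (0, 1) (s, a.2)) +
        (∫ t in a.2..b.2, greenField u v (1, 0) (b.1, t)) -
          ∫ t in a.2..b.2, greenField u v (1, 0) (a.1, t) := by
  have hdiff (e : ℝ × ℝ) : ∀ p ∈ Icc a b, DifferentiableAt ℝ (greenField u v e) p :=
    fun p hp => differentiableAt_greenField (hu p hp) (hv p hp) e
  have hcont (e : ℝ × ℝ) : ContinuousOn (greenField u v e) (Icc a b) :=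
    fun p hp => (hdiff e p hp).continuousAt.continuousWithinAt
  have hinterior : Ioo a.1 b.1 ×ˢ Ioo a.2 b.2 ⊆ Icc a b := by
    rw [Icc_prod_eq]
    exact prod_mono Ioo_subset_Icc_self Ioo_subset_Icc_self
  have hdiv : EqOn
      (fun p => u p * planarLaplacian v p - v p * planarLaplacian u p)
      (fun p => fderiv ℝ (greenField u v (1, 0)) p (1, 0) +
        fderiv ℝ (greenField u v (0, 1)) p (0, 1)) (Icc a b) := by
    intro p hp
    simp only [planarLaplacian, fderiv_greenField_apply (hu p hp) (hv p hp)]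
    ring
  have hdiv_cont : ContinuousOn
      (fun p => u p * planarLaplacian v p - v p * planarLaplacian u p) (Icc a b) := fun p hp =>
    (((hu p hp).continuousAt.mul (continuousAt_planarLaplacian (hv p hp))).sub
      ((hv p hp).continuousAt.mul
        (continuousAt_planarLaplacian (hu p hp)))).continuousWithinAt
  rw [setIntegral_congr_fun measurableSet_Icc hdiv]
  exact integral_divergence_prod_Icc_of_hasFDerivAt_of_le _ _ _ _ a b hab (hcont _) (hcont _)
    (fun p hp => (hdiff _ p (hinterior hp)).hasFDerivAt)
    (fun p hp => (hdiff _ p (hinterior hp)).hasFDerivAt)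
    ((hdiv_cont.congr hdiv.symm).integrableOn_compact isCompact_Icc)

section FunctionOfFst

variable {χ : ℝ → ℝ}

theorem fderiv_comp_fst_apply {p : ℝ × ℝ} (hχ : DifferentiableAt ℝ χ p.1) (e : ℝ × ℝ) :
    fderiv ℝ (fun q : ℝ × ℝ => χ q.1) p e = deriv χ p.1 * e.1 := by
  have h : HasFDerivAt (fun q : ℝ × ℝ => χ q.1) _ p :=
    hχ.hasDerivAt.comp_hasFDerivAt p (hasFDerivAt_fst (𝕜 := ℝ))
  simp [h.fderiv]

theorem planarLaplacian_comp_fst (hχ : ContDiff ℝ 2 χ) (p : ℝ × ℝ) :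
    planarLaplacian (fun q => χ q.1) p = deriv (deriv χ) p.1 := by
  have hχ' : Differentiable ℝ (deriv χ) :=
    ((contDiff_succ_iff_deriv (n := 1)).mp hχ).2.2.differentiable one_ne_zero
  simp [planarLaplacian, fderiv_comp_fst_apply (hχ.differentiable two_ne_zero _),
    fderiv_comp_fst_apply (hχ' _)]

theorem integral_mul_planarLaplacian_eq_integral_deriv_deriv_mul {E : ℝ × ℝ → ℝ}
    {a₁ b₁ a₂ b₂ : ℝ} (h₁ : a₁ ≤ b₁) (h₂ : a₂ ≤ b₂) (hχ : ContDiff ℝ 2 χ)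
    (ha : χ a₁ = 0) (hb : χ b₁ = 0) (ha' : deriv χ a₁ = 0) (hb' : deriv χ b₁ = 0)
    (hE : ∀ p ∈ Icc a₁ b₁ ×ˢ Icc a₂ b₂, ContDiffAt ℝ 2 E p)
    (hbot : ∀ s ∈ Icc a₁ b₁, fderiv ℝ E (s, a₂) (0, 1) = 0)
    (htop : ∀ s ∈ Icc a₁ b₁, fderiv ℝ E (s, b₂) (0, 1) = 0) :
    ∫ p in Icc a₁ b₁ ×ˢ Icc a₂ b₂, χ p.1 * planarLaplacian E p =
      ∫ p in Icc a₁ b₁ ×ˢ Icc a₂ b₂, deriv (deriv χ) p.1 * E p := by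
  have hw : ContDiff ℝ 2 fun p : ℝ × ℝ => χ p.1 := hχ.comp contDiff_fst
  have hdw (p e : ℝ × ℝ) := fderiv_comp_fst_apply (hχ.differentiable two_ne_zero p.1) e
  have vertical_flux {x : ℝ} (hx : χ x = 0) (hx' : deriv χ x = 0) :
      ∫ t in a₂..b₂, greenField (fun p : ℝ × ℝ => χ p.1) E (1, 0) (x, t) = 0 :=
    intervalIntegral.integral_zero_ae <| .of_forall fun t _ =>
      greenField_eq_zero_of_eq_zero hx (by simp [hdw, hx'])
  have horizontal_flux {y : ℝ} (hy : ∀ s ∈ Icc a₁ b₁, fderiv ℝ E (s, y) (0, 1) = 0) :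
      ∫ s in a₁..b₁, greenField (fun p : ℝ × ℝ => χ p.1) E (0, 1) (s, y) = 0 :=
    intervalIntegral.integral_zero_ae <| .of_forall fun s hs =>
      greenField_eq_zero_of_fderiv_eq_zero (by simp [hdw])
        (hy s (Ioc_subset_Icc_self (uIoc_of_le h₁ ▸ hs)))
  have hgreen : ∫ p in Icc a₁ b₁ ×ˢ Icc a₂ b₂,
      (χ p.1 * planarLaplacian E p - deriv (deriv χ) p.1 * E p) = 0 := by
    rw [Icc_prod_Icc] at hE ⊢
    have h := integral_mul_planarLaplacian_sub_eq_boundary (Prod.mk_le_mk.mpr ⟨h₁, h₂⟩)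
      (fun p _ => hw.contDiffAt) hE
    simpa only [planarLaplacian_comp_fst hχ, mul_comm (E _), horizontal_flux hbot,
      horizontal_flux htop, vertical_flux ha ha', vertical_flux hb hb', sub_zero, add_zero] using h
  have hcompact : IsCompact (Icc a₁ b₁ ×ˢ Icc a₂ b₂) := isCompact_Icc.prod isCompact_Icc
  have hχ'' : Continuous (deriv (deriv χ)) :=
    ((contDiff_succ_iff_deriv (n := 1)).mp hχ).2.2.continuous_deriv le_rfl
  rw [← sub_eq_zero, ← hgreen, integral_sub]
  · exact ContinuousOn.integrableOn_compact hcompact fun p hp =>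
      (hw.continuous.continuousAt.mul
        (continuousAt_planarLaplacian (hE p hp))).continuousWithinAt
  · exact ContinuousOn.integrableOn_compact hcompact fun p hp =>
      ((hχ''.comp continuous_fst).continuousAt.mul (hE p hp).continuousAt).continuousWithinAt

end FunctionOfFst

theorem mul_setIntegral_le_setIntegral_mul {α : Type*} [MeasurableSpace α] {μ : Measure α}
    {s t : Set α} {w g : α → ℝ} {c : ℝ} (hs : MeasurableSet s) (ht : MeasurableSet t)
    (hst : s ⊆ t) (hg : IntegrableOn g s μ) (hwg : IntegrableOn (fun x => w x * g x) t μ)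
    (hg0 : ∀ x ∈ t, 0 ≤ g x) (hw0 : ∀ x ∈ t, 0 ≤ w x) (hcw : ∀ x ∈ s, c ≤ w x) :
    c * ∫ x in s, g x ∂μ ≤ ∫ x in t, w x * g x ∂μ :=
  calc c * ∫ x in s, g x ∂μ = ∫ x in s, c * g x ∂μ := (integral_const_mul c g).symm
    _ ≤ ∫ x in s, w x * g x ∂μ :=
      setIntegral_mono_on (hg.const_mul c) (hwg.mono_set hst) hs fun x hx =>
        mul_le_mul_of_nonneg_right (hcw x hx) (hg0 x (hst hx))
    _ ≤ ∫ x in t, w x * g x ∂μ :=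
      setIntegral_mono_set hwg
        (ae_restrict_of_forall_mem ht fun x hx => mul_nonneg (hw0 x hx) (hg0 x hx))
        hst.eventuallyLE

/-- The cutoff `χ(s) = (l² - s²)²` for the interval `[-l, l]`, vanishing to second order at both
endpoints. It is not normalised to take the value `1` anywhere. -/
def quarticCutoff (l s : ℝ) : ℝ := (l ^ 2 - s ^ 2) ^ 2

theorem contDiff_quarticCutoff (l : ℝ) {n : WithTop ℕ∞} : ContDiff ℝ n (quarticCutoff l) := by
  unfold quarticCutoff
  fun_prop

theorem deriv_quarticCutoff (l : ℝ) :
    deriv (quarticCutoff l) = fun s => -4 * s * (l ^ 2 - s ^ 2) := by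
  funext s
  have h := (((hasDerivAt_id' s).fun_pow 2).const_sub (l ^ 2)).fun_pow 2
  refine (h.congr_deriv ?_).deriv
  push_cast
  ring

theorem deriv_deriv_quarticCutoff (l : ℝ) :
    deriv (deriv (quarticCutoff l)) = fun s => 12 * s ^ 2 - 4 * l ^ 2 := by
  rw [deriv_quarticCutoff]
  funext s
  have h := ((hasDerivAt_id' s).const_mul (-4)).fun_mul
    (((hasDerivAt_id' s).fun_pow 2).const_sub (l ^ 2))
  refine (h.congr_deriv ?_).deriv
  push_cast
  ring

theorem abs_deriv_deriv_quarticCutoff_le {l s : ℝ} (hs : s ∈ Icc (-l) l) :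
    |deriv (deriv (quarticCutoff l)) s| ≤ 8 * l ^ 2 := by
  have hsl : s ^ 2 ≤ l ^ 2 := sq_le_sq' hs.1 hs.2
  rw [deriv_deriv_quarticCutoff, abs_le]
  constructor <;> linarith [sq_nonneg s, sq_nonneg l]

theorem le_quarticCutoff {l r s : ℝ} (hrl : r ≤ l) (hs : s ∈ Icc (-r) r) :
    (l ^ 2 - r ^ 2) ^ 2 ≤ quarticCutoff l s := by
  have hsr : s ^ 2 ≤ r ^ 2 := sq_le_sq' hs.1 hs.2
  have hr : 0 ≤ r := by linarith [hs.1, hs.2]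
  have hrl_sq : r ^ 2 ≤ l ^ 2 := by gcongr
  unfold quarticCutoff
  gcongr

theorem integral_quarticCutoff_mul_planarLaplacian_le {l a b C : ℝ} (hl : 0 ≤ l) (hab : a ≤ b)
    {E : ℝ × ℝ → ℝ} (hE : ∀ p ∈ Icc (-l) l ×ˢ Icc a b, ContDiffAt ℝ 2 E p)
    (hC : ∀ p ∈ Icc (-l) l ×ˢ Icc a b, |E p| ≤ C)
    (hbot : ∀ s ∈ Icc (-l) l, fderiv ℝ E (s, a) (0, 1) = 0)
    (htop : ∀ s ∈ Icc (-l) l, fderiv ℝ E (s, b) (0, 1) = 0) :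
    ∫ p in Icc (-l) l ×ˢ Icc a b, quarticCutoff l p.1 * planarLaplacian E p ≤
      16 * l ^ 3 * (b - a) * C := by
  have hll : -l ≤ l := by linarith
  have hbound : ∀ p ∈ Icc (-l) l ×ˢ Icc a b,
      ‖deriv (deriv (quarticCutoff l)) p.1 * E p‖ ≤ 8 * l ^ 2 * C := fun p hp => by
    rw [norm_mul]
    exact mul_le_mul (abs_deriv_deriv_quarticCutoff_le hp.1) (hC p hp) (abs_nonneg _)
      (by positivity)
  have hfinite : volume (Icc (-l) l ×ˢ Icc a b) < ⊤ :=
    (isCompact_Icc.prod isCompact_Icc).measure_lt_top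
  calc ∫ p in Icc (-l) l ×ˢ Icc a b, quarticCutoff l p.1 * planarLaplacian E p
      = ∫ p in Icc (-l) l ×ˢ Icc a b, deriv (deriv (quarticCutoff l)) p.1 * E p :=
        integral_mul_planarLaplacian_eq_integral_deriv_deriv_mul hll hab
          (contDiff_quarticCutoff l) (by simp [quarticCutoff]) (by simp [quarticCutoff])
          (by simp [deriv_quarticCutoff]) (by simp [deriv_quarticCutoff]) hE hbot htop
    _ ≤ 8 * l ^ 2 * C * volume.real (Icc (-l) l ×ˢ Icc a b) :=
        (Real.le_norm_self _).trans (norm_setIntegral_le_of_norm_le_const hfinite hbound)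
    _ = 16 * l ^ 3 * (b - a) * C := by
        rw [Measure.volume_eq_prod, measureReal_prod_prod, Real.volume_real_Icc_of_le hll,
          Real.volume_real_Icc_of_le hab]
        ring

theorem stmt_8_general {l r a b C : ℝ} (hr : 0 ≤ r) (hrl : r < l) (hab : a ≤ b) {E : ℝ × ℝ → ℝ}
    (hE : ∀ p ∈ Icc (-l) l ×ˢ Icc a b, ContDiffAt ℝ 2 E p)
    (hΔ : ∀ p ∈ Icc (-l) l ×ˢ Icc a b, 0 ≤ planarLaplacian E p)
    (hC : ∀ p ∈ Icc (-l) l ×ˢ Icc a b, |E p| ≤ C)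
    (hbot : ∀ s ∈ Icc (-l) l, fderiv ℝ E (s, a) (0, 1) = 0)
    (htop : ∀ s ∈ Icc (-l) l, fderiv ℝ E (s, b) (0, 1) = 0) :
    ∫ p in Icc (-r) r ×ˢ Icc a b, planarLaplacian E p ≤
      16 * l ^ 3 * (b - a) * C / (l ^ 2 - r ^ 2) ^ 2 := by
  have hgap : 0 < l ^ 2 - r ^ 2 := sub_pos.mpr (by gcongr)
  have hsub : Icc (-r) r ×ˢ Icc a b ⊆ Icc (-l) l ×ˢ Icc a b :=
    prod_mono (Icc_subset_Icc (neg_le_neg hrl.le) hrl.le) subset_rfl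
  have hcompact : IsCompact (Icc (-l) l ×ˢ Icc a b) := isCompact_Icc.prod isCompact_Icc
  have hΔ_cont : ContinuousOn (planarLaplacian E) (Icc (-l) l ×ˢ Icc a b) :=
    fun p hp => (continuousAt_planarLaplacian (hE p hp)).continuousWithinAt
  have hχ_cont : Continuous fun p : ℝ × ℝ => quarticCutoff l p.1 :=
    (contDiff_quarticCutoff l (n := 0)).continuous.comp continuous_fst
  rw [le_div_iff₀' (pow_pos hgap 2)]
  calc (l ^ 2 - r ^ 2) ^ 2 * ∫ p in Icc (-r) r ×ˢ Icc a b, planarLaplacian E p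
      ≤ ∫ p in Icc (-l) l ×ˢ Icc a b, quarticCutoff l p.1 * planarLaplacian E p :=
        mul_setIntegral_le_setIntegral_mul (measurableSet_Icc.prod measurableSet_Icc)
          hcompact.measurableSet hsub ((hΔ_cont.integrableOn_compact hcompact).mono_set hsub)
          ((hχ_cont.continuousOn.mul hΔ_cont).integrableOn_compact hcompact) hΔ
          (fun p _ => sq_nonneg (l ^ 2 - p.1 ^ 2)) fun p hp => le_quarticCutoff hrl.le hp.1
    _ ≤ 16 * l ^ 3 * (b - a) * C :=
        integral_quarticCutoff_mul_planarLaplacian_le (hr.trans hrl.le) hab hE hC hbot htop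

/-- The K-energy is approximately harmonic (abstract form): there is a universal
constant `c₀ > 0` such that whenever `E` is `C²` near the rectangle
`R_l = [−l,l] × [0,1]` (`l ≥ 1`), with `ΔE ≥ 0` and `|E| ≤ C` on `R_l`, and
`∂E/∂t = 0` on both horizontal edges, then
`∫_{[−l/2,l/2]×[0,1]} ΔE ≤ c₀·C/l`. -/
theorem stmt_8 :
    ∃ c₀ : ℝ, 0 < c₀ ∧
      ∀ (l C : ℝ), 1 ≤ l → 0 ≤ C →
        ∀ (E : ℝ × ℝ → ℝ) (U : Set (ℝ × ℝ)),
          IsOpen U → (Icc (-l) l ×ˢ Icc (0:ℝ) 1) ⊆ U →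
          ContDiffOn ℝ 2 E U →
          (∀ p ∈ Icc (-l) l ×ˢ Icc (0:ℝ) 1,
            0 ≤ fderiv ℝ (fun q => fderiv ℝ E q (1, 0)) p (1, 0)
              + fderiv ℝ (fun q => fderiv ℝ E q (0, 1)) p (0, 1)) →
          (∀ p ∈ Icc (-l) l ×ˢ Icc (0:ℝ) 1, |E p| ≤ C) →
          (∀ s ∈ Icc (-l) l, fderiv ℝ E (s, 0) (0, 1) = 0) →
          (∀ s ∈ Icc (-l) l, fderiv ℝ E (s, 1) (0, 1) = 0) →
          (∫ p in Icc (-l/2) (l/2) ×ˢ Icc (0:ℝ) 1,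
              (fderiv ℝ (fun q => fderiv ℝ E q (1, 0)) p (1, 0)
               + fderiv ℝ (fun q => fderiv ℝ E q (0, 1)) p (0, 1)))
            ≤ c₀ * C / l := by
  refine ⟨256 / 9, by norm_num, fun l C hl _ E U hU hRU hE hΔ hC h0 h1 => ?_⟩
  rw [neg_div]
  refine (stmt_8_general (r := l / 2) (by linarith) (by linarith) zero_le_one
    (fun p hp => hE.contDiffAt (hU.mem_nhds (hRU hp))) hΔ hC h0 h1).trans_eq ?_
  field_simp
  ring
end

section
/- Let S = { z ∈ ℂ : 0 < Im z < 1 } be the open strip and S̄ its closure. Let u : ℂ → ℝ be continuous on S̄, twice continuously differentiable on S and harmonic there (D²u(z)(1,1) + D²u(z)(i,i) = 0 for all z ∈ S), with u ≤ 0 on S̄ and u(z) = 0 whenever Im z = 0 or Im z = 1. If ∫_S e^{−u(z)} / (1 + (Re z)²) dA(z) < ∞ (integration with respect to planar Lebesgue measure), then u ≡ 0 on S̄. -/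
open MeasureTheory

/-!
Let `v = -u ≥ 0`, and let `φ x` be the integral of `v (x + i y)` against the sine `s` that vanishes
at both ends of the vertical section of the strip. Since `v` and `s` vanish on the boundary, Green's
identity shows that `φ'' = k² φ` in the weak sense, with `k > 0`; the behaviour of the derivatives
of `v` at the boundary is circumvented by applying the identity to dilations of `v`. Testing the
equation with the bump `(1 - (x / R)²)²`, whose second derivative is `O(R⁻²)`, gives
`k² ∫ (1 - (x / R)²)² φ ≤ 8 R⁻² ∫ φ` over `[-R, R]`. As `R → ∞` the left-hand side increases, while
the right-hand side tends to `0` because `φ x / (1 + x²)` is integrable. Hence `φ = 0`, and then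
`v = 0` because `v ≥ 0` and `s > 0` inside the strip.
-/

section Calculus

open Set

theorem integral_deriv_deriv_mul {a b : ℝ} {f f' f'' g g' g'' : ℝ → ℝ}
    (hf : ∀ x ∈ uIcc a b, HasDerivAt f (f' x) x)
    (hf' : ∀ x ∈ uIcc a b, HasDerivAt f' (f'' x) x)
    (hg : ∀ x ∈ uIcc a b, HasDerivAt g (g' x) x)
    (hg' : ∀ x ∈ uIcc a b, HasDerivAt g' (g'' x) x)
    (hf'' : IntervalIntegrable f'' volume a b) (hg'' : IntervalIntegrable g'' volume a b) :
    ∫ x in a..b, f'' x * g x =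
      f' b * g b - f' a * g a - (f b * g' b - f a * g' a) + ∫ x in a..b, f x * g'' x := by
  have continuousOn_of_hasDerivAt {h h' : ℝ → ℝ} (hh : ∀ x ∈ uIcc a b, HasDerivAt h (h' x) x) :
      ContinuousOn h (uIcc a b) := fun x hx => (hh x hx).continuousAt.continuousWithinAt
  have hf''g : IntervalIntegrable (fun x => f'' x * g x) volume a b :=
    hf''.mul_continuousOn (continuousOn_of_hasDerivAt hg)
  have hfg'' : IntervalIntegrable (fun x => f x * g'' x) volume a b :=
    hg''.continuousOn_mul (continuousOn_of_hasDerivAt hf)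
  have hderiv : ∀ x ∈ uIcc a b,
      HasDerivAt (fun x => f' x * g x - f x * g' x) (f'' x * g x - f x * g'' x) x :=
    fun x hx => (((hf' x hx).fun_mul (hg x hx)).fun_sub ((hf x hx).fun_mul (hg' x hx))).congr_deriv
      (by ring)
  rw [← sub_eq_iff_eq_add, ← intervalIntegral.integral_sub hf''g hfg'',
    intervalIntegral.integral_eq_sub_of_hasDerivAt hderiv (hf''g.sub hfg'')]
  ring

theorem integral_mul_integral_swap {F : ℂ → ℝ} {f g : ℝ → ℝ} {p q a b : ℝ}
    (hF : ContinuousOn F (uIcc p q ×ℂ uIcc a b)) (hf : Continuous f) (hg : Continuous g) :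
    ∫ x in p..q, f x * ∫ y in a..b, F (x + y * Complex.I) * g y =
      ∫ y in a..b, g y * ∫ x in p..q, F (x + y * Complex.I) * f x := by
  simp only [← intervalIntegral.integral_const_mul]
  rw [intervalIntegral_intervalIntegral_swap]
  · simp only [mul_left_comm, mul_comm]
  · have hcont : ContinuousOn
        (fun z : ℝ × ℝ => f z.1 * (F (z.1 + z.2 * Complex.I) * g z.2))
        (uIcc p q ×ˢ uIcc a b) := by
      refine (by fun_prop : Continuous fun z : ℝ × ℝ => f z.1).continuousOn.mul
        ((hF.comp (by fun_prop) fun z hz => ?_).mul (by fun_prop))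
      simpa [Complex.mem_reProdIm] using mem_prod.1 hz
    exact (hcont.integrableOn_compact (isCompact_uIcc.prod isCompact_uIcc)).mono_set
      (prod_mono uIoc_subset_uIcc uIoc_subset_uIcc)

theorem eqOn_zero_of_integral_eq_zero {f : ℝ → ℝ} {a b : ℝ} (hf : ContinuousOn f (Icc a b))
    (hab : a < b) (hnonneg : ∀ x ∈ Icc a b, 0 ≤ f x) (hzero : ∫ x in a..b, f x = 0) :
    EqOn f 0 (Icc a b) := by
  intro c hc
  by_contra hne
  exact hzero.not_gt <| intervalIntegral.integral_pos hab hf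
    (fun x hx => hnonneg x (Ioc_subset_Icc_self hx)) ⟨c, hc, (hnonneg c hc).lt_of_ne' hne⟩

end Calculus

section Harmonic

open Set Metric InnerProductSpace
open scoped Topology

theorem laplacian_eq_fderiv_fderiv {f : ℂ → ℝ} {z : ℂ} (hf : ContDiffAt ℝ 2 f z) :
    Laplacian.laplacian f z = fderiv ℝ (fun w => fderiv ℝ f w 1) z 1
      + fderiv ℝ (fun w => fderiv ℝ f w Complex.I) z Complex.I := by
  have hd : DifferentiableAt ℝ (fderiv ℝ f) z :=
    (hf.fderiv_right (m := 1) (by norm_num)).differentiableAt one_ne_zero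
  rw [fderiv_clm_apply hd (by fun_prop), fderiv_clm_apply hd (by fun_prop)]
  simp [laplacian_eq_iteratedFDeriv_complexPlane, iteratedFDeriv_two_apply]

theorem harmonicOnNhd_of_fderiv_fderiv_eq_zero {f : ℂ → ℝ} {S : Set ℂ} (hS : IsOpen S)
    (hf : ContDiffOn ℝ 2 f S)
    (hzero : ∀ z ∈ S, fderiv ℝ (fun w => fderiv ℝ f w 1) z 1
      + fderiv ℝ (fun w => fderiv ℝ f w Complex.I) z Complex.I = 0) :
    HarmonicOnNhd f S := fun z hz => by
  refine ⟨hf.contDiffAt (hS.mem_nhds hz), ?_⟩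
  filter_upwards [hS.mem_nhds hz] with w hw
  exact (laplacian_eq_fderiv_fderiv (hf.contDiffAt (hS.mem_nhds hw))).trans (hzero w hw)

theorem harmonicAt_comp_of_analyticAt {f : ℂ → ℝ} {g : ℂ → ℂ} {z : ℂ} (hf : HarmonicAt f (g z))
    (hg : AnalyticAt ℂ g z) : HarmonicAt (f ∘ g) z := by
  obtain ⟨r, hr, hball⟩ := eventually_nhds_iff_ball.1 hf.eventually
  obtain ⟨F, hF, hre⟩ := HarmonicOnNhd.exists_analyticOnNhd_ball_re_eq hball
  have hFg : AnalyticAt ℂ (F ∘ g) z := (hF _ (mem_ball_self hr)).comp hg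
  have heq : f ∘ g =ᶠ[𝓝 z] fun w => (F (g w)).re := by
    filter_upwards [hg.continuousAt.preimage_mem_nhds (ball_mem_nhds _ hr)] with w hw
    exact (hre hw).symm
  exact (harmonicAt_congr_nhds heq).2 hFg.harmonicAt_re

section Line

variable {E : Type*} [NormedAddCommGroup E] [NormedSpace ℝ E]

theorem contDiffAt_fderiv_apply_s10 {f : E → ℝ} {z : E} {n : ℕ} (hf : ContDiffAt ℝ (n + 1) f z)
    (e : E) : ContDiffAt ℝ n (fun w => fderiv ℝ f w e) z :=
  (hf.fderiv_right le_rfl).clm_apply contDiffAt_const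

theorem continuousAt_fderiv_fderiv_apply {f : E → ℝ} {z : E} (hf : ContDiffAt ℝ 2 f z) (e : E) :
    ContinuousAt (fun w => fderiv ℝ (fun w => fderiv ℝ f w e) w e) z :=
  (contDiffAt_fderiv_apply_s10 (n := 0) (contDiffAt_fderiv_apply_s10 (n := 1) hf e) e).continuousAt

theorem integral_fderiv_fderiv_comp_mul {f : E → ℝ} {γ : ℝ → E} {e : E} {a b : ℝ}
    {g g' g'' : ℝ → ℝ} (hγ : ∀ t, HasDerivAt γ e t) (hf : ∀ t ∈ uIcc a b, ContDiffAt ℝ 2 f (γ t))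
    (hg : ∀ t, HasDerivAt g (g' t) t) (hg' : ∀ t, HasDerivAt g' (g'' t) t)
    (hg'' : Continuous g'') :
    ∫ t in a..b, fderiv ℝ (fun w => fderiv ℝ f w e) (γ t) e * g t =
      fderiv ℝ f (γ b) e * g b - fderiv ℝ f (γ a) e * g a
        - (f (γ b) * g' b - f (γ a) * g' a) + ∫ t in a..b, f (γ t) * g'' t := by
  have hcont : ContinuousOn (fun t => fderiv ℝ (fun w => fderiv ℝ f w e) (γ t) e) (uIcc a b) :=
    fun t ht => ((continuousAt_fderiv_fderiv_apply (hf t ht) e).comp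
      (hγ t).continuousAt).continuousWithinAt
  refine integral_deriv_deriv_mul (f := f ∘ γ) (f' := fun t => fderiv ℝ f (γ t) e)
    (fun t ht => ?_) (fun t ht => ?_) (fun t _ => hg t) (fun t _ => hg' t)
    hcont.intervalIntegrable (hg''.intervalIntegrable _ _)
  · exact ((hf t ht).differentiableAt two_ne_zero).hasFDerivAt.comp_hasDerivAt t (hγ t)
  · exact ((contDiffAt_fderiv_apply_s10 (n := 1) (hf t ht) e).differentiableAt
      one_ne_zero).hasFDerivAt.comp_hasDerivAt t (hγ t)

end Line

/-- A test function on `[p, q]`: a twice continuously differentiable `χ`, with its first two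
derivatives `χ'` and `χ''`, that vanishes together with `χ'` at both ends. -/
structure IsTestFunction (p q : ℝ) (χ χ' χ'' : ℝ → ℝ) : Prop where
  hasDerivAt : ∀ x, HasDerivAt χ (χ' x) x
  hasDerivAt_deriv : ∀ x, HasDerivAt χ' (χ'' x) x
  continuous_deriv_deriv : Continuous χ''
  left_eq_zero : χ p = 0
  right_eq_zero : χ q = 0
  deriv_left_eq_zero : χ' p = 0
  deriv_right_eq_zero : χ' q = 0

theorem IsTestFunction.continuous {p q : ℝ} {χ χ' χ'' : ℝ → ℝ} (hχ : IsTestFunction p q χ χ' χ'') :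
    Continuous χ := continuous_iff_continuousAt.2 fun x => (hχ.hasDerivAt x).continuousAt

theorem fderiv_fderiv_one_eq_neg {v : ℂ → ℝ} {z : ℂ} (hv : HarmonicAt v z) :
    fderiv ℝ (fun w => fderiv ℝ v w 1) z 1 =
      -fderiv ℝ (fun w => fderiv ℝ v w Complex.I) z Complex.I :=
  eq_neg_of_add_eq_zero_left ((laplacian_eq_fderiv_fderiv hv.1).symm.trans hv.2.self_of_nhds)

theorem hasDerivAt_ofReal_add (w : ℂ) (x : ℝ) : HasDerivAt (fun x : ℝ => (x + w : ℂ)) 1 x := by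
  simpa using (Complex.ofRealCLM.hasDerivAt (x := x)).add_const w

theorem hasDerivAt_add_ofReal_mul_I (w : ℂ) (y : ℝ) :
    HasDerivAt (fun y : ℝ => w + y * Complex.I) Complex.I y := by
  simpa using ((Complex.ofRealCLM.hasDerivAt (x := y)).mul_const Complex.I).const_add w

theorem green_identity_rectangle {v : ℂ → ℝ} {p q a b : ℝ} {χ χ' χ'' s s' s'' : ℝ → ℝ}
    (hv : HarmonicOnNhd v (uIcc p q ×ℂ uIcc a b))
    (hχ : IsTestFunction p q χ χ' χ'')
    (hs : ∀ y, HasDerivAt s (s' y) y) (hs' : ∀ y, HasDerivAt s' (s'' y) y) (hs'' : Continuous s'')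
    (hsa : s a = 0) (hsb : s b = 0) :
    ∫ x in p..q, χ'' x * ∫ y in a..b, v (x + y * Complex.I) * s y =
      ∫ x in p..q, χ x * (v (x + b * Complex.I) * s' b - v (x + a * Complex.I) * s' a
        - ∫ y in a..b, v (x + y * Complex.I) * s'' y) := by
  have hmem {x y : ℝ} (hx : x ∈ uIcc p q) (hy : y ∈ uIcc a b) :
      (x + y * Complex.I : ℂ) ∈ uIcc p q ×ℂ uIcc a b := by
    simpa [Complex.mem_reProdIm] using And.intro hx hy
  have horizontal {y : ℝ} (hy : y ∈ uIcc a b) :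
      ∫ x in p..q, fderiv ℝ (fun w => fderiv ℝ v w 1) (x + y * Complex.I) 1 * χ x =
        ∫ x in p..q, v (x + y * Complex.I) * χ'' x := by
    rw [integral_fderiv_fderiv_comp_mul (hasDerivAt_ofReal_add _)
      (fun x hx => (hv _ (hmem hx hy)).1) hχ.hasDerivAt hχ.hasDerivAt_deriv
      hχ.continuous_deriv_deriv, hχ.left_eq_zero, hχ.right_eq_zero, hχ.deriv_left_eq_zero,
      hχ.deriv_right_eq_zero]
    simp
  have vertical {x : ℝ} (hx : x ∈ uIcc p q) :
      ∫ y in a..b, fderiv ℝ (fun w => fderiv ℝ v w 1) (x + y * Complex.I) 1 * s y =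
        v (x + b * Complex.I) * s' b - v (x + a * Complex.I) * s' a
          - ∫ y in a..b, v (x + y * Complex.I) * s'' y := by
    rw [intervalIntegral.integral_congr fun y hy => by
        rw [fderiv_fderiv_one_eq_neg (hv _ (hmem hx hy)), neg_mul],
      intervalIntegral.integral_neg, integral_fderiv_fderiv_comp_mul (hasDerivAt_add_ofReal_mul_I x)
      (fun y hy => (hv _ (hmem hx hy)).1) hs hs' hs'', hsa, hsb]
    ring
  have hvxx : ContinuousOn (fun z => fderiv ℝ (fun w => fderiv ℝ v w 1) z 1)
      (uIcc p q ×ℂ uIcc a b) := fun z hz =>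
    (continuousAt_fderiv_fderiv_apply (hv z hz).1 1).continuousWithinAt
  have hsc : Continuous s := continuous_iff_continuousAt.2 fun y => (hs y).continuousAt
  calc ∫ x in p..q, χ'' x * ∫ y in a..b, v (x + y * Complex.I) * s y
      = ∫ y in a..b, s y * ∫ x in p..q, v (x + y * Complex.I) * χ'' x :=
        integral_mul_integral_swap hv.continuousOn hχ.continuous_deriv_deriv hsc
    _ = ∫ y in a..b, s y *
          ∫ x in p..q, fderiv ℝ (fun w => fderiv ℝ v w 1) (x + y * Complex.I) 1 * χ x :=
        intervalIntegral.integral_congr fun y hy => by rw [horizontal hy]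
    _ = ∫ x in p..q, χ x *
          ∫ y in a..b, fderiv ℝ (fun w => fderiv ℝ v w 1) (x + y * Complex.I) 1 * s y :=
        (integral_mul_integral_swap hvxx hχ.continuous hsc).symm
    _ = _ := intervalIntegral.integral_congr fun x hx => by rw [vertical hx]

end Harmonic

section SineCoefficient

open Set InnerProductSpace

theorem harmonicOnNhd_comp_homothety {f : ℂ → ℝ} {S : Set ℂ} (hf : HarmonicOnNhd f S)
    (hopen : IsOpen S) (hconvex : Convex ℝ S) {c : ℂ} (hc : c ∈ S) {t : ℝ} (ht : t ∈ Ioo 0 1) :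
    HarmonicOnNhd (f ∘ AffineMap.homothety c t) (closure S) := fun z hz => by
  refine harmonicAt_comp_of_analyticAt (hf _ ?_) ?_
  · rw [AffineMap.homothety_eq_lineMap]
    exact interior_subset (hconvex.openSegment_interior_closure_subset_interior
      (hopen.interior_eq.symm ▸ hc) hz (lineMap_mem_openSegment ℝ c z ht))
  · simp only [AffineMap.coe_homothety, vsub_eq_sub, vadd_eq_add, Complex.real_smul]
    fun_prop

/-- The first Fourier sine coefficient (up to normalization) of the restriction of `v` to the
vertical segment over `x` between the heights `a` and `b`. -/
noncomputable def sineCoeff (v : ℂ → ℝ) (a b x : ℝ) : ℝ :=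
  ∫ y in a..b, v (x + y * Complex.I) * Real.sin (Real.pi / (b - a) * (y - a))

/-- The equation `φ'' = κ φ` in the weak sense: both derivatives are moved to the test functions. -/
def IsWeakSolution (κ : ℝ) (φ : ℝ → ℝ) : Prop :=
  ∀ ⦃p q : ℝ⦄ ⦃χ χ' χ'' : ℝ → ℝ⦄, IsTestFunction p q χ χ' χ'' →
    ∫ x in p..q, χ'' x * φ x = ∫ x in p..q, χ x * (κ * φ x)

variable {v : ℂ → ℝ} {a b : ℝ}

theorem sin_pi_div_mul_sub_pos {y : ℝ} (hy : y ∈ Ioo a b) :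
    0 < Real.sin (Real.pi / (b - a) * (y - a)) := by
  have hba : 0 < b - a := sub_pos.2 (hy.1.trans hy.2)
  have hya : 0 < y - a := sub_pos.2 hy.1
  refine Real.sin_pos_of_pos_of_lt_pi (by positivity) ?_
  rw [div_mul_eq_mul_div, div_lt_iff₀ hba]
  exact mul_lt_mul_of_pos_left (sub_lt_sub_right hy.2 a) Real.pi_pos

theorem sin_pi_div_mul_sub_nonneg (hab : a < b) {y : ℝ} (hy : y ∈ Icc a b) :
    0 ≤ Real.sin (Real.pi / (b - a) * (y - a)) := by
  have hba : 0 < b - a := sub_pos.2 hab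
  have hya : 0 ≤ y - a := sub_nonneg.2 hy.1
  refine Real.sin_nonneg_of_nonneg_of_le_pi (by positivity) ?_
  rw [div_mul_eq_mul_div, div_le_iff₀ hba]
  exact mul_le_mul_of_nonneg_left (sub_le_sub_right hy.2 a) Real.pi_pos.le

theorem continuous_sineCoeff {X : Type*} [TopologicalSpace X] {F : X → ℂ → ℝ} {g : X → ℝ}
    (hF : Continuous fun z : X × ℂ => F z.1 z.2) (hg : Continuous g) :
    Continuous fun t => sineCoeff (F t) a b (g t) := by
  refine intervalIntegral.continuous_parametric_intervalIntegral_of_continuous' ?_ _ _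
  exact (hF.comp (by fun_prop : Continuous fun z : X × ℝ =>
    (z.1, (g z.1 + z.2 * Complex.I : ℂ)))).mul (by fun_prop)

theorem integral_mul_sineCoeff_of_harmonicOnNhd_closed {p q : ℝ} {χ χ' χ'' : ℝ → ℝ} (hab : a < b)
    (hv : HarmonicOnNhd v (Complex.im ⁻¹' Icc a b))
    (hχ : IsTestFunction p q χ χ' χ'') :
    ∫ x in p..q, χ'' x * sineCoeff v a b x =
      ∫ x in p..q, χ x * ((Real.pi / (b - a)) ^ 2 * sineCoeff v a b x
        - Real.pi / (b - a) * (v (x + a * Complex.I) + v (x + b * Complex.I))) := by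
  unfold sineCoeff
  set k := Real.pi / (b - a)
  have hkb : k * (b - a) = Real.pi := div_mul_cancel₀ _ (sub_pos.2 hab).ne'
  have hphase (y : ℝ) : HasDerivAt (fun y => k * (y - a)) k y := by
    simpa using ((hasDerivAt_id y).sub_const a).const_mul k
  have hsin (y : ℝ) :
      HasDerivAt (fun y => Real.sin (k * (y - a))) (k * Real.cos (k * (y - a))) y := by
    simpa only [mul_comm] using (hphase y).sin
  have hcos (y : ℝ) : HasDerivAt (fun y => k * Real.cos (k * (y - a)))
      (-k ^ 2 * Real.sin (k * (y - a))) y :=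
    ((hphase y).cos.const_mul k).congr_deriv (by ring)
  rw [green_identity_rectangle (hv.mono fun z hz => ?_) hχ hsin hcos (by fun_prop)
    (by simp) (by simp [hkb])]
  · simp only [hkb, sub_self, mul_zero, Real.cos_pi, Real.cos_zero, mul_left_comm _ (-k ^ 2),
      intervalIntegral.integral_const_mul]
    congr! 2 with x
    ring
  · simpa only [uIcc_of_le hab.le] using hz.2

theorem integral_mul_sineCoeff_of_harmonicOnNhd_open {p q : ℝ} {χ χ' χ'' : ℝ → ℝ} (hab : a < b)
    (hcont : Continuous v) (hharm : HarmonicOnNhd v (Complex.im ⁻¹' Ioo a b))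
    (hχ : IsTestFunction p q χ χ' χ'') :
    ∫ x in p..q, χ'' x * sineCoeff v a b x =
      ∫ x in p..q, χ x * ((Real.pi / (b - a)) ^ 2 * sineCoeff v a b x
        - Real.pi / (b - a) * (v (x + a * Complex.I) + v (x + b * Complex.I))) := by
  obtain ⟨m, hm⟩ := exists_between hab
  let c : ℂ := m * Complex.I
  have hc : c ∈ Complex.im ⁻¹' Ioo a b := by simpa [c] using hm
  let dilate (t : ℝ) : ℂ → ℝ := v ∘ AffineMap.homothety c t
  have hdilate : Continuous fun z : ℝ × ℂ => dilate z.1 z.2 := by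
    simp only [dilate, Function.comp_apply, AffineMap.homothety_apply, vsub_eq_sub, vadd_eq_add]
    fun_prop
  have hcoeff : Continuous fun z : ℝ × ℝ => sineCoeff (dilate z.1) a b z.2 :=
    continuous_sineCoeff (hdilate.comp (by fun_prop : Continuous fun z : (ℝ × ℝ) × ℂ =>
      (z.1.1, z.2))) continuous_snd
  have hident : EqOn (fun t => ∫ x in p..q, χ'' x * sineCoeff (dilate t) a b x)
      (fun t => ∫ x in p..q, χ x * ((Real.pi / (b - a)) ^ 2 * sineCoeff (dilate t) a b x
        - Real.pi / (b - a) * (dilate t (x + a * Complex.I) + dilate t (x + b * Complex.I))))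
      (Ioo 0 1) := fun t ht => by
    refine integral_mul_sineCoeff_of_harmonicOnNhd_closed hab ?_ hχ
    rw [← closure_Ioo hab.ne, ← Complex.closure_preimage_im]
    exact harmonicOnNhd_comp_homothety hharm (isOpen_Ioo.preimage Complex.continuous_im)
      ((convex_Ioo a b).linear_preimage Complex.imLm) hc ht
  have hχ_cont : Continuous χ := hχ.continuous
  have hχ''_cont : Continuous χ'' := hχ.continuous_deriv_deriv
  have hone : (1 : ℝ) ∈ closure (Ioo 0 1) := by simp [closure_Ioo]
  simpa [dilate] using hident.closure (by fun_prop) (by fun_prop) hone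

theorem isWeakSolution_sineCoeff (hab : a < b) (hcont : Continuous v)
    (hharm : HarmonicOnNhd v (Complex.im ⁻¹' Ioo a b))
    (hbdry : ∀ z : ℂ, z.im = a ∨ z.im = b → v z = 0) :
    IsWeakSolution ((Real.pi / (b - a)) ^ 2) (sineCoeff v a b) := by
  intro p q χ χ' χ'' hχ
  simpa [hbdry] using integral_mul_sineCoeff_of_harmonicOnNhd_open hab hcont hharm hχ

theorem integrable_sineCoeff_div (hab : a ≤ b)
    (hv : IntegrableOn (fun z => v z / (1 + z.re ^ 2)) (Complex.im ⁻¹' Ioo a b)) :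
    Integrable fun x => sineCoeff v a b x / (1 + x ^ 2) := by
  have hsin : IntegrableOn (fun z : ℂ => Real.sin (Real.pi / (b - a) * (z.im - a))
      * (v z / (1 + z.re ^ 2))) (Complex.im ⁻¹' Ioo a b) :=
    hv.bdd_mul (Continuous.aestronglyMeasurable (by fun_prop))
      (.of_forall fun _ => Real.abs_sin_le_one _)
  have hprod := (Complex.volume_preserving_equiv_real_prod.symm.integrableOn_comp_preimage
    Complex.measurableEquivRealProd.symm.measurableEmbedding).2 hsin
  have hpreimage : Complex.measurableEquivRealProd.symm ⁻¹' (Complex.im ⁻¹' Ioo a b) =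
      univ ×ˢ Ioo a b := by
    ext z
    simp [Complex.measurableEquivRealProd_symm_apply]
  rw [IntegrableOn, hpreimage, Measure.volume_eq_prod, ← Measure.prod_restrict,
    Measure.restrict_univ] at hprod
  refine hprod.integral_prod_left.congr (.of_forall fun x => ?_)
  simp only [sineCoeff, intervalIntegral.integral_of_le hab, integral_Ioc_eq_integral_Ioo,
    ← integral_div]
  congr! 2
  simp only [Function.comp_apply, Complex.measurableEquivRealProd_symm_apply,
    ← Complex.mk_eq_add_mul_I]
  ring

theorem sineCoeff_nonneg (hab : a < b) (hv : ∀ z, 0 ≤ v z) (x : ℝ) : 0 ≤ sineCoeff v a b x :=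
  intervalIntegral.integral_nonneg hab.le fun _ hy =>
    mul_nonneg (hv _) (sin_pi_div_mul_sub_nonneg hab hy)

theorem eqOn_zero_of_sineCoeff_eq_zero (hab : a < b) (hcont : Continuous v) (hv : ∀ z, 0 ≤ v z)
    (hzero : sineCoeff v a b = 0) : EqOn v 0 (Complex.im ⁻¹' Ioo a b) := by
  intro z hz
  have hprod := eqOn_zero_of_integral_eq_zero (Continuous.continuousOn (by fun_prop)) hab
    (fun y hy => mul_nonneg (hv _) (sin_pi_div_mul_sub_nonneg hab hy)) (congrFun hzero z.re)
    (Ioo_subset_Icc_self hz)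
  simpa [(sin_pi_div_mul_sub_pos hz).ne'] using hprod

end SineCoefficient

section WeakSolution

open Set Filter
open scoped Topology

theorem tendsto_integral_div_sq {φ : ℝ → ℝ} (hφ : Integrable fun x => φ x / (1 + x ^ 2)) :
    Tendsto (fun R : ℝ => (∫ x in -R..R, φ x) / R ^ 2) atTop (𝓝 0) := by
  let K (R x : ℝ) : ℝ := (Ioc (-R) R).indicator (fun x => (1 + x ^ 2) / R ^ 2) x
  have hK_le {R : ℝ} (hR : 1 ≤ R) (x : ℝ) : ‖K R x‖ ≤ 2 := by
    refine (norm_indicator_eq_indicator_norm _ _).trans_le (indicator_apply_le' (fun hx => ?_) ?_)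
    · have hR2 : 1 ≤ R ^ 2 := one_le_pow₀ hR
      rw [Real.norm_of_nonneg (by positivity), div_le_iff₀ (by positivity)]
      linarith [sq_le_sq' hx.1.le hx.2]
    · simp
  have hK_tendsto (x : ℝ) : Tendsto (fun R => K R x) atTop (𝓝 0) := by
    refine squeeze_zero_norm (fun R => norm_indicator_le_norm_self _ _) ?_
    have hquot : Tendsto (fun R : ℝ => (1 + x ^ 2) / R ^ 2) atTop (𝓝 0) :=
      tendsto_const_nhds.div_atTop (tendsto_pow_atTop two_ne_zero)
    simpa using hquot.norm
  have hlim : Tendsto (fun R => ∫ x, K R x * (φ x / (1 + x ^ 2))) atTop (𝓝 (∫ _ : ℝ, (0 : ℝ))) := by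
    refine tendsto_integral_filter_of_dominated_convergence
      (fun x => 2 * ‖φ x / (1 + x ^ 2)‖) (.of_forall fun R => ?_) ?_ (hφ.norm.const_mul 2)
      (.of_forall fun x => by simpa using (hK_tendsto x).mul_const (φ x / (1 + x ^ 2)))
    · exact ((Measurable.indicator (by fun_prop) measurableSet_Ioc).aestronglyMeasurable).mul hφ.1
    · filter_upwards [eventually_ge_atTop 1] with R hR
      refine .of_forall fun x => ?_
      rw [norm_mul]
      gcongr
      exact hK_le hR x
  rw [integral_zero] at hlim
  refine hlim.congr' ?_
  filter_upwards [eventually_ge_atTop 0] with R hR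
  rw [intervalIntegral.integral_of_le (by linarith), ← integral_div,
    ← integral_indicator measurableSet_Ioc]
  congr with x
  have hx : 1 + x ^ 2 ≠ 0 := by positivity
  by_cases hxR : x ∈ Ioc (-R) R
  · simp only [K, indicator_of_mem hxR]
    field_simp
  · simp only [K, indicator_of_notMem hxR, zero_mul]

theorem hasDerivAt_one_sub_div_sq_sq (R x : ℝ) :
    HasDerivAt (fun x => (1 - (x / R) ^ 2) ^ 2) (-4 * x / R ^ 2 * (1 - (x / R) ^ 2)) x := by
  have hquot : HasDerivAt (fun x => x / R) (1 / R) x := (hasDerivAt_id x).div_const R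
  exact (((hquot.fun_pow 2).const_sub 1).fun_pow 2).congr_deriv (by ring)

theorem hasDerivAt_mul_one_sub_div_sq (R x : ℝ) :
    HasDerivAt (fun x => -4 * x / R ^ 2 * (1 - (x / R) ^ 2))
      ((12 * (x / R) ^ 2 - 4) / R ^ 2) x := by
  have hquot : HasDerivAt (fun x => x / R) (1 / R) x := (hasDerivAt_id x).div_const R
  have hlinear : HasDerivAt (fun x => -4 * x / R ^ 2) (-4 / R ^ 2) x := by
    simpa using ((hasDerivAt_id x).const_mul (-4)).div_const (R ^ 2)
  exact (hlinear.fun_mul ((hquot.fun_pow 2).const_sub 1)).congr_deriv (by ring)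

theorem isTestFunction_one_sub_div_sq_sq {R : ℝ} (hR : R ≠ 0) :
    IsTestFunction (-R) R (fun x => (1 - (x / R) ^ 2) ^ 2)
      (fun x => -4 * x / R ^ 2 * (1 - (x / R) ^ 2)) (fun x => (12 * (x / R) ^ 2 - 4) / R ^ 2) where
  hasDerivAt := hasDerivAt_one_sub_div_sq_sq R
  hasDerivAt_deriv := hasDerivAt_mul_one_sub_div_sq R
  continuous_deriv_deriv := by fun_prop
  left_eq_zero := by simp [hR]
  right_eq_zero := by simp [hR]
  deriv_left_eq_zero := by simp [hR]
  deriv_right_eq_zero := by simp [hR]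

theorem integral_one_sub_div_sq_sq_mul_mono {φ : ℝ → ℝ} (hφ : Continuous φ) (hnonneg : ∀ x, 0 ≤ φ x)
    {r R : ℝ} (hr : 0 < r) (hrR : r ≤ R) :
    ∫ x in -r..r, (1 - (x / r) ^ 2) ^ 2 * φ x ≤ ∫ x in -R..R, (1 - (x / R) ^ 2) ^ 2 * φ x := by
  calc ∫ x in -r..r, (1 - (x / r) ^ 2) ^ 2 * φ x
      ≤ ∫ x in -r..r, (1 - (x / R) ^ 2) ^ 2 * φ x := by
        refine intervalIntegral.integral_mono_on (by linarith)
          (Continuous.intervalIntegrable (by fun_prop) _ _)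
          (Continuous.intervalIntegrable (by fun_prop) _ _) fun x hx => ?_
        have hle : (x / R) ^ 2 ≤ (x / r) ^ 2 := by
          rw [div_pow, div_pow]
          gcongr
        have hone : (x / r) ^ 2 ≤ 1 := by
          rw [div_pow, div_le_one (by positivity)]
          exact sq_le_sq' hx.1 hx.2
        gcongr
        · exact hnonneg x
    _ ≤ ∫ x in -R..R, (1 - (x / R) ^ 2) ^ 2 * φ x :=
        intervalIntegral.integral_mono_interval (by linarith) (by linarith) hrR
          (.of_forall fun x => mul_nonneg (by positivity) (hnonneg x))
          (Continuous.intervalIntegrable (by fun_prop) _ _)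

theorem IsWeakSolution.mul_integral_le {κ : ℝ} {φ : ℝ → ℝ} (hweak : IsWeakSolution κ φ)
    (hφ : Continuous φ) (hnonneg : ∀ x, 0 ≤ φ x) {R : ℝ} (hR : 0 < R) :
    κ * ∫ x in -R..R, (1 - (x / R) ^ 2) ^ 2 * φ x ≤ 8 * ((∫ x in -R..R, φ x) / R ^ 2) := by
  calc κ * ∫ x in -R..R, (1 - (x / R) ^ 2) ^ 2 * φ x
      = ∫ x in -R..R, (1 - (x / R) ^ 2) ^ 2 * (κ * φ x) := by
        simp only [← intervalIntegral.integral_const_mul, mul_left_comm]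
    _ = ∫ x in -R..R, (12 * (x / R) ^ 2 - 4) / R ^ 2 * φ x :=
        (hweak (isTestFunction_one_sub_div_sq_sq hR.ne')).symm
    _ ≤ ∫ x in -R..R, 8 / R ^ 2 * φ x := by
        refine intervalIntegral.integral_mono_on (by linarith)
          (Continuous.intervalIntegrable (by fun_prop) _ _)
          (Continuous.intervalIntegrable (by fun_prop) _ _) fun x hx => ?_
        have hone : (x / R) ^ 2 ≤ 1 := by
          rw [div_pow, div_le_one (by positivity)]
          exact sq_le_sq' hx.1 hx.2
        gcongr
        · exact hnonneg x
        · linarith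
    _ = 8 * ((∫ x in -R..R, φ x) / R ^ 2) := by
        rw [intervalIntegral.integral_const_mul]
        ring

theorem IsWeakSolution.integral_one_sub_div_sq_sq_mul_eq_zero {κ : ℝ} {φ : ℝ → ℝ}
    (hweak : IsWeakSolution κ φ) (hκ : 0 < κ) (hφ : Continuous φ) (hnonneg : ∀ x, 0 ≤ φ x)
    (hint : Integrable fun x => φ x / (1 + x ^ 2)) {r : ℝ} (hr : 0 < r) :
    ∫ x in -r..r, (1 - (x / r) ^ 2) ^ 2 * φ x = 0 := by
  have hle : κ * ∫ x in -r..r, (1 - (x / r) ^ 2) ^ 2 * φ x ≤ 8 * 0 := by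
    refine ge_of_tendsto ((tendsto_integral_div_sq hint).const_mul 8) ?_
    filter_upwards [eventually_ge_atTop r] with R hR
    refine le_trans ?_ (hweak.mul_integral_le hφ hnonneg (hr.trans_le hR))
    gcongr
    exact integral_one_sub_div_sq_sq_mul_mono hφ hnonneg hr hR
  rw [mul_zero] at hle
  exact le_antisymm (nonpos_of_mul_nonpos_right hle hκ) <|
    intervalIntegral.integral_nonneg (by linarith)
      fun x _ => mul_nonneg (by positivity) (hnonneg x)

theorem IsWeakSolution.eq_zero {κ : ℝ} {φ : ℝ → ℝ} (hweak : IsWeakSolution κ φ) (hκ : 0 < κ)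
    (hφ : Continuous φ) (hnonneg : ∀ x, 0 ≤ φ x)
    (hint : Integrable fun x => φ x / (1 + x ^ 2)) : φ = 0 := by
  funext x
  set r := |x| + 1
  have hr0 : 0 < r := by positivity
  have hxr : (x / r) ^ 2 < 1 := by
    rw [div_pow, div_lt_one (by positivity), ← sq_abs x]
    gcongr
    exact lt_add_one _
  have hprod := eqOn_zero_of_integral_eq_zero (Continuous.continuousOn (by fun_prop))
    (neg_lt_self hr0) (fun y _ => mul_nonneg (by positivity) (hnonneg y))
    (hweak.integral_one_sub_div_sq_sq_mul_eq_zero hκ hφ hnonneg hint hr0)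
    (abs_le.1 (lt_add_one |x|).le)
  simpa [(sub_pos.2 hxr).ne'] using hprod

end WeakSolution

section Strip

open Set InnerProductSpace

theorem integrable_div_of_integrable_exp_neg_div {α : Type*} [MeasurableSpace α] {μ : Measure α}
    {f w : α → ℝ} (hf : AEStronglyMeasurable f μ) (hw : AEStronglyMeasurable w μ)
    (hf_nonpos : ∀ᵐ x ∂μ, f x ≤ 0) (hint : Integrable (fun x => Real.exp (-f x) / w x) μ) :
    Integrable (fun x => f x / w x) μ := by
  refine hint.mono (hf.div₀ hw) ?_
  filter_upwards [hf_nonpos] with x hx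
  simp only [norm_div, Real.norm_eq_abs, Real.abs_exp, abs_of_nonpos hx]
  gcongr
  linarith [Real.add_one_le_exp (-f x)]

theorem continuous_indicator_preimage_im_Ioo {f : ℂ → ℝ} {a b : ℝ} (hab : a < b)
    (hf : ContinuousOn f (closure (Complex.im ⁻¹' Ioo a b)))
    (hbdry : ∀ z : ℂ, z.im = a ∨ z.im = b → f z = 0) :
    Continuous ((Complex.im ⁻¹' Ioo a b).indicator f) := by
  refine continuous_indicator (fun z hz => hbdry z ?_) hf
  simpa [Complex.frontier_preimage_im, frontier_Ioo hab] using hz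

theorem stmt_10_general {u : ℂ → ℝ} {a b : ℝ}
    (hcont : ContinuousOn u (closure (Complex.im ⁻¹' Ioo a b)))
    (hharm : HarmonicOnNhd u (Complex.im ⁻¹' Ioo a b))
    (hnonpos : ∀ z ∈ Complex.im ⁻¹' Ioo a b, u z ≤ 0)
    (hbdry : ∀ z : ℂ, z.im = a ∨ z.im = b → u z = 0)
    (hint : IntegrableOn (fun z : ℂ => u z / (1 + z.re ^ 2)) (Complex.im ⁻¹' Ioo a b)) :
    EqOn u 0 (closure (Complex.im ⁻¹' Ioo a b)) := by
  suffices hopen : EqOn u 0 (Complex.im ⁻¹' Ioo a b) from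
    hopen.of_subset_closure hcont continuousOn_const subset_closure subset_rfl
  intro z hz
  have hab : a < b := hz.1.trans hz.2
  have hstrip : IsOpen (Complex.im ⁻¹' Ioo a b) := isOpen_Ioo.preimage Complex.continuous_im
  let v : ℂ → ℝ := (Complex.im ⁻¹' Ioo a b).indicator (-u)
  have hv_eq : EqOn v (-u) (Complex.im ⁻¹' Ioo a b) := fun _ hw => indicator_of_mem hw _
  have hv_cont : Continuous v :=
    continuous_indicator_preimage_im_Ioo hab hcont.neg fun w hw => by simp [hbdry w hw]
  have hv_harm : HarmonicOnNhd v (Complex.im ⁻¹' Ioo a b) := fun w hw =>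
    (harmonicAt_congr_nhds (hv_eq.eventuallyEq_of_mem (hstrip.mem_nhds hw))).2 (hharm w hw).neg
  have hv_nonneg : ∀ w, 0 ≤ v w :=
    indicator_nonneg fun w hw => neg_nonneg.2 (hnonpos w hw)
  have hv_bdry : ∀ w : ℂ, w.im = a ∨ w.im = b → v w = 0 := by
    rintro w (rfl | rfl) <;> simp [v]
  have hv_int : IntegrableOn (fun z => v z / (1 + z.re ^ 2)) (Complex.im ⁻¹' Ioo a b) :=
    hint.neg.congr_fun (fun w hw => by simp [hv_eq hw, neg_div]) hstrip.measurableSet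
  have hzero : sineCoeff v a b = 0 :=
    (isWeakSolution_sineCoeff hab hv_cont hv_harm hv_bdry).eq_zero
      (pow_pos (div_pos Real.pi_pos (sub_pos.2 hab)) 2)
      (continuous_sineCoeff (F := fun _ => v) (hv_cont.comp continuous_snd) continuous_id)
      (sineCoeff_nonneg hab hv_nonneg) (integrable_sineCoeff_div hab.le hv_int)
  simpa [hv_eq hz] using eqOn_zero_of_sineCoeff_eq_zero hab hv_cont hv_nonneg hzero hz

end Strip

/-- Uniqueness on the strip: a nonpositive function, continuous on the closed strip
`0 ≤ Im z ≤ 1`, harmonic in the open strip, vanishing on the two boundary lines,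
and satisfying the weighted integrability `∫_S e^{−u(z)}/(1 + (Re z)²) < ∞`, must
vanish identically on the closed strip. -/
theorem stmt_10 (u : ℂ → ℝ)
    (S : Set ℂ) (hS : S = {z : ℂ | 0 < z.im ∧ z.im < 1})
    (hcont : ContinuousOn u (closure S))
    (hsmooth : ContDiffOn ℝ 2 u S)
    (hharm : ∀ z ∈ S,
      fderiv ℝ (fun w => fderiv ℝ u w 1) z 1
        + fderiv ℝ (fun w => fderiv ℝ u w Complex.I) z Complex.I = 0)
    (hnonpos : ∀ z ∈ closure S, u z ≤ 0)
    (hbdry : ∀ z : ℂ, z.im = 0 ∨ z.im = 1 → u z = 0)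
    (hint : IntegrableOn (fun z : ℂ => Real.exp (-u z) / (1 + z.re ^ 2)) S) :
    ∀ z ∈ closure S, u z = 0 := by
  have hopen : IsOpen S := hS ▸ isOpen_Ioo.preimage Complex.continuous_im
  have hint_u : IntegrableOn (fun z => u z / (1 + z.re ^ 2)) S :=
    integrable_div_of_integrable_exp_neg_div
      ((hcont.mono subset_closure).aestronglyMeasurable hopen.measurableSet)
      (Continuous.aestronglyMeasurable (by fun_prop))
      (ae_restrict_of_forall_mem hopen.measurableSet fun z hz => hnonpos z (subset_closure hz)) hint
  have hharm_u := harmonicOnNhd_of_fderiv_fderiv_eq_zero hopen hsmooth hharm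
  subst hS
  exact stmt_10_general hcont hharm_u (fun z hz => hnonpos z (subset_closure hz)) hbdry hint_u
end

section
/- For every M ≥ 0 and every r ∈ (0,1) there exists K ≥ 0 such that: if h : ℂ → ℝ is twice continuously differentiable on the open unit disk with h(z) ≤ M and |Δh(z)| ≤ M for all |z| < 1, and h(0) ≥ −M, then h(z) ≥ −K for all |z| ≤ r. -/
/-!
Multiplied by `s²`, the Laplacian in polar coordinates around `c` is the sum of the squares of
`s ∂ₛ` and `∂_θ`. The angular derivative averages to zero over a circle, so the circle average
`A s` of a function `u` with `Δ u ≤ M` satisfies `(s d/ds)² A ≤ M s²`. Integrating twice from the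
center gives `A s ≤ u c + M s² / 4`, and integrating over the radius gives an area mean value
inequality with error `M s² / 8`.

For `u ≥ 0` with `|Δ u| ≤ M`, a small disk around `z` lies in a large one around the center `c`, so
the integral of `u` over the former is at most its integral over the latter. Bounding the former
below by `u z` and the latter above by `u c` gives a Harnack inequality, which is applied to
`u = M - h`.
-/

open Complex InnerProductSpace Laplacian MeasureTheory Metric Real Set Topology

theorem laplacian_const_sub {E F : Type*} [NormedAddCommGroup E] [InnerProductSpace ℝ E]
    [FiniteDimensional ℝ E] [NormedAddCommGroup F] [NormedSpace ℝ F] {u : E → F} {x : E}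
    (hu : ContDiffAt ℝ 2 u x) (b : F) : Δ (fun y => b - u y) x = -Δ u x := by
  have hsub : (fun y => b - u y) = (fun _ => b) - u := rfl
  rw [hsub, contDiffAt_const.laplacian_sub hu, laplacian_const, Pi.zero_apply, zero_sub]

section SpiralDeriv

variable {F : Type*} [NormedAddCommGroup F] [NormedSpace ℝ F] {u : ℂ → F} {U : Set ℂ} {c z : ℂ}

/-- The derivative of `u` along the vector field `z ↦ a * (z - c)`, which generates the spiral
similarities `z ↦ c + exp (t * a) * (z - c)`: in polar coordinates around `c` it is `s ∂ₛ` for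
`a = 1` and `∂_θ` for `a = I`. -/
noncomputable def spiralDeriv (c a : ℂ) (u : ℂ → F) (z : ℂ) : F :=
  fderiv ℝ u z (a * (z - c))

theorem contDiffOn_spiralDeriv {m n : WithTop ℕ∞} (hU : IsOpen U) (hu : ContDiffOn ℝ n u U)
    (hmn : m + 1 ≤ n) (c a : ℂ) : ContDiffOn ℝ m (spiralDeriv c a u) U :=
  (hu.fderiv_of_isOpen hU hmn).clm_apply (by fun_prop)

theorem laplacian_eq_fderiv_fderiv_s11 (u : ℂ → F) (z : ℂ) :
    Δ u z = fderiv ℝ (fderiv ℝ u) z 1 1 + fderiv ℝ (fderiv ℝ u) z I I := by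
  simp [laplacian_eq_iteratedFDeriv_complexPlane, iteratedFDeriv_two_apply]

theorem laplacian_eq_fderiv_fderiv_apply (hu : DifferentiableAt ℝ (fderiv ℝ u) z) :
    Δ u z = fderiv ℝ (fun w => fderiv ℝ u w 1) z 1 + fderiv ℝ (fun w => fderiv ℝ u w I) z I := by
  simp [laplacian_eq_fderiv_fderiv_s11, fderiv_clm_apply hu (differentiableAt_const _)]

theorem spiralDeriv_spiralDeriv (hu : DifferentiableAt ℝ (fderiv ℝ u) z) (a : ℂ) :
    spiralDeriv c a (spiralDeriv c a u) z =
      fderiv ℝ (fderiv ℝ u) z (a * (z - c)) (a * (z - c)) +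
        fderiv ℝ u z (a * (a * (z - c))) := by
  have hfield : HasFDerivAt (fun w => a * (w - c)) (a • ContinuousLinearMap.id ℝ ℂ) z :=
    ((hasFDerivAt_id z).sub_const c).const_mul a
  have hDu : HasFDerivAt (spiralDeriv c a u) _ z := hu.hasFDerivAt.clm_apply hfield
  rw [spiralDeriv, hDu.fderiv]
  simp [add_comm]

theorem apply_self_add_apply_I_mul_self (B : ℂ →L[ℝ] ℂ →L[ℝ] F) (w : ℂ) :
    B w w + B (I * w) (I * w) = ‖w‖ ^ 2 • (B 1 1 + B I I) := by
  have hw : w = w.re • (1 : ℂ) + w.im • I := by apply Complex.ext <;> simp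
  have hIw : I * w = (-w.im) • (1 : ℂ) + w.re • I := by apply Complex.ext <;> simp
  rw [hIw, ← normSq_eq_norm_sq, normSq_apply]
  nth_rw 1 2 [hw]
  simp only [map_add, map_smul, add_apply, smul_apply]
  module

/-- The polar form `s² Δ = (s ∂ₛ)² + ∂_θ²` of the Laplacian. -/
theorem spiralDeriv_one_add_spiralDeriv_I (hu : DifferentiableAt ℝ (fderiv ℝ u) z) :
    spiralDeriv c 1 (spiralDeriv c 1 u) z + spiralDeriv c I (spiralDeriv c I u) z =
      ‖z - c‖ ^ 2 • Δ u z := by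
  have hI : I * (I * (z - c)) = -(z - c) := by rw [← mul_assoc, I_mul_I, neg_one_mul]
  rw [laplacian_eq_fderiv_fderiv_s11, ← apply_self_add_apply_I_mul_self, spiralDeriv_spiralDeriv hu,
    spiralDeriv_spiralDeriv hu, hI, map_neg]
  simp only [one_mul]
  abel

end SpiralDeriv

section CircleAverage

variable {F : Type*} [NormedAddCommGroup F] [NormedSpace ℝ F] {c : ℂ} {R s : ℝ}

theorem circleAverage_spiralDeriv_I_eq_zero {u : ℂ → F} [CompleteSpace F]
    (hu : ∀ z ∈ sphere c |s|, DifferentiableAt ℝ u z)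
    (hint : CircleIntegrable (spiralDeriv c I u) c s) :
    circleAverage (spiralDeriv c I u) c s = 0 := by
  have hderiv (θ : ℝ) :
      HasDerivAt (fun θ => u (circleMap c s θ)) (spiralDeriv c I u (circleMap c s θ)) θ := by
    rw [spiralDeriv, circleMap_sub_center, mul_comm]
    exact (hu _ (circleMap_mem_sphere' c s θ)).hasFDerivAt.comp_hasDerivAt θ
      (hasDerivAt_circleMap c s θ)
  rw [circleAverage, intervalIntegral.integral_eq_sub_of_hasDerivAt (fun θ _ => hderiv θ) hint]
  simp [circleMap]

theorem hasDerivAt_circleMap_radius (c : ℂ) (s θ : ℝ) :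
    HasDerivAt (fun s => circleMap c s θ) (circleMap 0 1 θ) s := by
  simpa [circleMap] using ((hasDerivAt_id s).ofReal_comp.mul_const (cexp (θ * I))).const_add c

theorem hasDerivAt_circleAverage {u : ℂ → F} (hu : ContDiffOn ℝ 1 u (ball c R)) (hs : |s| < R) :
    HasDerivAt (circleAverage u c)
      ((2 * π)⁻¹ • ∫ θ in 0..2 * π, fderiv ℝ u (circleMap c s θ) (circleMap 0 1 θ)) s := by
  obtain ⟨ρ, hsρ, hρR⟩ := exists_between hs
  have hmem {t : ℝ} (ht : |t| < ρ) (θ : ℝ) : circleMap c t θ ∈ ball c ρ :=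
    sphere_subset_ball ht (circleMap_mem_sphere' c t θ)
  have hsub : ball c ρ ⊆ ball c R := ball_subset_ball hρR.le
  have hDu : ContinuousOn (fderiv ℝ u) (ball c R) :=
    hu.continuousOn_fderiv_of_isOpen isOpen_ball le_rfl
  obtain ⟨B, hB⟩ := (isCompact_closedBall c ρ).exists_bound_of_continuousOn
    (hDu.mono (closedBall_subset_ball hρR))
  have hnhds : {t : ℝ | |t| < ρ} ∈ 𝓝 s := (isOpen_lt continuous_abs continuous_const).mem_nhds hsρ
  have hcont {t : ℝ} (ht : |t| < ρ) : Continuous fun θ => u (circleMap c t θ) :=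
    hu.continuousOn.comp_continuous (by fun_prop) fun θ => hsub (hmem ht θ)
  have hcont' : Continuous fun θ => fderiv ℝ u (circleMap c s θ) (circleMap 0 1 θ) :=
    (hDu.comp_continuous (by fun_prop) fun θ => hsub (hmem hsρ θ)).clm_apply (by fun_prop)
  refine (intervalIntegral.hasDerivAt_integral_of_dominated_loc_of_deriv_le
    (bound := fun _ => B) (F' := fun t θ => fderiv ℝ u (circleMap c t θ) (circleMap 0 1 θ)) hnhds
    (Filter.mem_of_superset hnhds fun t ht => (hcont ht).aestronglyMeasurable)
    ((hcont hsρ).intervalIntegrable _ _) hcont'.aestronglyMeasurable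
    (.of_forall fun θ _ t ht => ?bound) intervalIntegrable_const
    (.of_forall fun θ _ t ht => ?radial)).2.const_smul (2 * π)⁻¹
  case bound =>
    simpa using (fderiv ℝ u (circleMap c t θ)).le_of_opNorm_le
      (hB _ (ball_subset_closedBall (hmem ht θ))) (circleMap 0 1 θ)
  case radial =>
    exact ((hu.differentiableOn one_ne_zero).differentiableAt
      (isOpen_ball.mem_nhds (hsub (hmem ht θ)))).hasFDerivAt.comp_hasDerivAt t
        (hasDerivAt_circleMap_radius c t θ)

theorem hasDerivAt_circleAverage_of_ne_zero {u : ℂ → F} (hu : ContDiffOn ℝ 1 u (ball c R))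
    (hs : |s| < R) (hs₀ : s ≠ 0) :
    HasDerivAt (circleAverage u c) (s⁻¹ • circleAverage (spiralDeriv c 1 u) c s) s := by
  have hscale (θ : ℝ) : fderiv ℝ u (circleMap c s θ) (circleMap 0 1 θ) =
      s⁻¹ • spiralDeriv c 1 u (circleMap c s θ) := by
    rw [spiralDeriv, ← map_smul]
    simp [circleMap, hs₀]
  refine (hasDerivAt_circleAverage hu hs).congr_deriv ?_
  simp only [hscale, intervalIntegral.integral_smul, circleAverage, smul_comm s⁻¹]

theorem circleAverage_le_of_circleAverage_spiralDeriv_le {u : ℂ → ℝ} {m : ℝ} {n : ℕ} (hn : n ≠ 0)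
    (hu : ContDiffOn ℝ 1 u (ball c R))
    (hm : ∀ t ∈ Ioo 0 R, circleAverage (spiralDeriv c 1 u) c t ≤ m * t ^ n) (hs : s ∈ Ico 0 R) :
    circleAverage u c s ≤ u c + m / n * s ^ n := by
  have hcont : ContinuousOn (circleAverage u c) (Ico 0 R) :=
    (hu.continuousOn.mono fun z hz => mem_ball_iff_norm.mpr hz.2).circleAverage fun t ht => ht.1
  have hderiv (t : ℝ) (ht : t ∈ Ioo 0 R) :
      HasDerivAt (fun t => circleAverage u c t - m / n * t ^ n)
        (t⁻¹ * (circleAverage (spiralDeriv c 1 u) c t - m * t ^ n)) t := by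
    have ht₀ := ht.1.ne'
    refine ((hasDerivAt_circleAverage_of_ne_zero hu (by rw [abs_of_pos ht.1]; exact ht.2) ht₀).sub
      ((hasDerivAt_pow n t).const_mul (m / n))).congr_deriv ?_
    rw [smul_eq_mul, ← mul_pow_sub_one hn t]
    field_simp
  have hanti : AntitoneOn (fun t => circleAverage u c t - m / n * t ^ n) (Ico 0 R) := by
    refine antitoneOn_of_hasDerivWithinAt_nonpos (convex_Ico 0 R)
      (hcont.sub (by fun_prop)) (fun t ht => (hderiv t ?_).hasDerivWithinAt) fun t ht => ?_
    · rwa [interior_Ico] at ht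
    · rw [interior_Ico] at ht
      exact mul_nonpos_of_nonneg_of_nonpos (inv_nonneg.mpr ht.1.le) (sub_nonpos.mpr (hm t ht))
  have hle := hanti ⟨le_rfl, hs.1.trans_lt hs.2⟩ hs hs.1
  simpa [hn] using hle

theorem circleAverage_le_of_laplacian_le {u : ℂ → ℝ} {M : ℝ} (hu : ContDiffOn ℝ 2 u (ball c R))
    (hΔ : ∀ z ∈ ball c R, Δ u z ≤ M) (hs : s ∈ Ico 0 R) :
    circleAverage u c s ≤ u c + M / 4 * s ^ 2 := by
  have hspiral (a : ℂ) : ContDiffOn ℝ 1 (spiralDeriv c a u) (ball c R) :=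
    contDiffOn_spiralDeriv isOpen_ball hu (by norm_num) c a
  have hspiral₂ (a : ℂ) : ContinuousOn (spiralDeriv c a (spiralDeriv c a u)) (ball c R) :=
    (contDiffOn_spiralDeriv (m := 0) isOpen_ball (hspiral a) (by norm_num) c a).continuousOn
  have hDu : DifferentiableOn ℝ (fderiv ℝ u) (ball c R) :=
    (hu.fderiv_of_isOpen (m := 1) isOpen_ball (by norm_num)).differentiableOn one_ne_zero
  have hradial₂ (t : ℝ) (ht : t ∈ Ioo 0 R) :
      circleAverage (spiralDeriv c 1 (spiralDeriv c 1 u)) c t ≤ M * t ^ 2 := by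
    have htR : |t| < R := by rw [abs_of_pos ht.1]; exact ht.2
    have hsub := sphere_subset_ball (x := c) htR
    have hint (a : ℂ) := ((hspiral₂ a).mono hsub).circleIntegrable'
    have hangular : circleAverage (spiralDeriv c I (spiralDeriv c I u)) c t = 0 :=
      circleAverage_spiralDeriv_I_eq_zero (fun z hz => ((hspiral I).differentiableOn
        one_ne_zero).differentiableAt (isOpen_ball.mem_nhds (hsub hz))) (hint I)
    rw [← add_zero (circleAverage _ c t), ← hangular, ← circleAverage_add (hint 1) (hint I)]
    refine circleAverage_mono_on_of_le_circle ((hint 1).add (hint I)) fun z hz => ?_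
    rw [Pi.add_apply, spiralDeriv_one_add_spiralDeriv_I (hDu.differentiableAt
        (isOpen_ball.mem_nhds (hsub hz))), mem_sphere_iff_norm.mp hz, sq_abs, smul_eq_mul, mul_comm]
    exact mul_le_mul_of_nonneg_right (hΔ z (hsub hz)) (sq_nonneg t)
  have hradial (t : ℝ) (ht : t ∈ Ioo 0 R) :
      circleAverage (spiralDeriv c 1 u) c t ≤ M / 2 * t ^ 2 := by
    simpa [spiralDeriv] using circleAverage_le_of_circleAverage_spiralDeriv_le two_ne_zero
      (hspiral 1) hradial₂ (Ioo_subset_Ico_self ht)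
  convert circleAverage_le_of_circleAverage_spiralDeriv_le two_ne_zero
    (hu.of_le (by norm_num)) hradial hs using 2
  push_cast
  ring

end CircleAverage

section Disk

variable {F : Type*} [NormedAddCommGroup F] [NormedSpace ℝ F] {c : ℂ} {R ρ σ : ℝ}

theorem circleAverage_eq_integral_Ioo (u : ℂ → F) (c : ℂ) (R : ℝ) :
    circleAverage u c R = (2 * π)⁻¹ • ∫ θ in Ioo (-π) π, u (circleMap c R θ) := by
  rw [circleAverage_eq_integral_add (-π), ← integral_Ioc_eq_integral_Ioo,
    intervalIntegral.integral_comp_add_right (fun θ => u (circleMap c R θ)),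
    ← intervalIntegral.integral_of_le (by linarith [pi_pos])]
  ring_nf

theorem add_polarCoord_symm (c : ℂ) (p : ℝ × ℝ) :
    c + Complex.polarCoord.symm p = circleMap c p.1 p.2 := by
  simp [circleMap, exp_mul_I]

theorem integrableOn_smul_circleMap {u : ℂ → F} (hu : ContinuousOn u (closedBall c R)) :
    IntegrableOn (fun p : ℝ × ℝ => p.1 • u (circleMap c p.1 p.2)) (Ioc 0 R ×ˢ Ioo (-π) π) := by
  have hmaps : MapsTo (fun p : ℝ × ℝ => circleMap c p.1 p.2) (Icc 0 R ×ˢ Icc (-π) π)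
      (closedBall c R) := fun p hp =>
    closedBall_subset_closedBall hp.1.2 (circleMap_mem_closedBall c hp.1.1 p.2)
  exact ((continuous_fst.continuousOn.smul
    (hu.comp circleMap.continuous.continuousOn hmaps)).integrableOn_compact
      (isCompact_Icc.prod isCompact_Icc)).mono_set
        (prod_mono Ioc_subset_Icc_self Ioo_subset_Icc_self)

theorem setIntegral_closedBall_eq_setIntegral_polarCoord (u : ℂ → F) (c : ℂ) (R : ℝ) :
    ∫ z in closedBall c R, u z =
      ∫ p in Ioc 0 R ×ˢ Ioo (-π) π, p.1 • u (circleMap c p.1 p.2) := by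
  have hmem {p : ℝ × ℝ} (hp : p ∈ polarCoord.target) :
      circleMap c p.1 p.2 ∈ closedBall c R ↔ p ∈ Ioc 0 R ×ˢ Ioo (-π) π := by
    obtain ⟨hp₁, hp₂⟩ : 0 < p.1 ∧ p.2 ∈ Ioo (-π) π := hp
    simp [circleMap, abs_of_pos hp₁, mem_prod, hp₁, hp₂.1, hp₂.2]
  have hsub : Ioc 0 R ×ˢ Ioo (-π) π ⊆ polarCoord.target := prod_mono Ioc_subset_Ioi_self le_rfl
  calc ∫ z in closedBall c R, u z
      = ∫ z, (closedBall c R).indicator u (c + z) := by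
        rw [← integral_indicator measurableSet_closedBall, integral_add_left_eq_self]
    _ = ∫ p in polarCoord.target, (Ioc 0 R ×ˢ Ioo (-π) π).indicator
          (fun p : ℝ × ℝ => p.1 • u (circleMap c p.1 p.2)) p := by
        rw [← Complex.integral_comp_polarCoord_symm]
        refine setIntegral_congr_fun polarCoord.open_target.measurableSet fun p hp => ?_
        simp only [add_polarCoord_symm, indicator, hmem hp, smul_ite, smul_zero]
    _ = ∫ p in Ioc 0 R ×ˢ Ioo (-π) π, p.1 • u (circleMap c p.1 p.2) := by
        rw [setIntegral_indicator (measurableSet_Ioc.prod measurableSet_Ioo),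
          inter_eq_right.mpr hsub]

theorem setIntegral_closedBall_eq_integral_circleAverage {u : ℂ → F} (hR : 0 ≤ R)
    (hu : ContinuousOn u (closedBall c R)) :
    ∫ z in closedBall c R, u z = (2 * π) • ∫ s in 0..R, s • circleAverage u c s := by
  have hcircle (s : ℝ) : ∫ θ in Ioo (-π) π, s • u (circleMap c s θ) =
      (2 * π) • s • circleAverage u c s := by
    rw [circleAverage_eq_integral_Ioo, smul_comm s, smul_inv_smul₀ two_pi_pos.ne', integral_smul]
  rw [setIntegral_closedBall_eq_setIntegral_polarCoord, Measure.volume_eq_prod,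
    setIntegral_prod _ (integrableOn_smul_circleMap hu), ← intervalIntegral.integral_of_le hR,
    ← intervalIntegral.integral_smul]
  simp only [hcircle]

theorem setIntegral_closedBall_le_of_laplacian_le {u : ℂ → ℝ} {M : ℝ}
    (hu : ContDiffOn ℝ 2 u (ball c R)) (hΔ : ∀ z ∈ ball c R, Δ u z ≤ M) (hρ : 0 ≤ ρ)
    (hρR : ρ < R) :
    ∫ z in closedBall c ρ, u z ≤ π * ρ ^ 2 * (u c + M / 8 * ρ ^ 2) := by
  have hu' : ContinuousOn u (closedBall c ρ) :=
    hu.continuousOn.mono (closedBall_subset_ball hρR)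
  have hcont : ContinuousOn (fun s => s • circleAverage u c s) (Icc 0 ρ) :=
    continuousOn_id.smul <| (hu'.mono fun z hz => mem_closedBall_iff_norm.mpr hz.2).circleAverage
      fun s hs => hs.1
  have hmean : ∫ s in 0..ρ, s • circleAverage u c s ≤
      ∫ s in 0..ρ, (u c * s + M / 4 * s ^ 3) := by
    refine intervalIntegral.integral_mono_on hρ (hcont.intervalIntegrable_of_Icc hρ)
      (Continuous.intervalIntegrable (by fun_prop) _ _) fun s hs => ?_
    calc s • circleAverage u c s ≤ s * (u c + M / 4 * s ^ 2) := mul_le_mul_of_nonneg_left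
          (circleAverage_le_of_laplacian_le hu hΔ ⟨hs.1, hs.2.trans_lt hρR⟩) hs.1
      _ = u c * s + M / 4 * s ^ 3 := by ring
  calc ∫ z in closedBall c ρ, u z
      = 2 * π * ∫ s in 0..ρ, s • circleAverage u c s :=
        setIntegral_closedBall_eq_integral_circleAverage hρ hu'
    _ ≤ 2 * π * ∫ s in 0..ρ, (u c * s + M / 4 * s ^ 3) := by gcongr
    _ = π * ρ ^ 2 * (u c + M / 8 * ρ ^ 2) := by
        rw [intervalIntegral.integral_add (Continuous.intervalIntegrable (by fun_prop) _ _)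
          (Continuous.intervalIntegrable (by fun_prop) _ _),
          intervalIntegral.integral_const_mul, intervalIntegral.integral_const_mul,
          integral_id, integral_pow]
        push_cast
        ring

theorem harnack_of_abs_laplacian_le {u : ℂ → ℝ} {M : ℝ} {z : ℂ}
    (hu : ContDiffOn ℝ 2 u (ball c R)) (hnonneg : ∀ w ∈ ball c R, 0 ≤ u w)
    (hΔ : ∀ w ∈ ball c R, |Δ u w| ≤ M) (hρ : 0 < ρ) (hz : dist z c + ρ ≤ σ) (hσR : σ < R) :
    u z ≤ (σ / ρ) ^ 2 * (u c + M / 8 * σ ^ 2) + M / 8 * ρ ^ 2 := by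
  have hσ : 0 ≤ σ := by linarith [dist_nonneg (x := z) (y := c)]
  have hsub : ball z (ρ + (R - σ)) ⊆ ball c R := ball_subset_ball' (by linarith)
  have hσsub : closedBall c σ ⊆ ball c R := closedBall_subset_ball hσR
  have hcenter : ∫ w in closedBall c σ, u w ≤ π * σ ^ 2 * (u c + M / 8 * σ ^ 2) :=
    setIntegral_closedBall_le_of_laplacian_le hu (fun w hw => le_of_abs_le (hΔ w hw)) hσ hσR
  have hpoint : ∫ w in closedBall z ρ, -u w ≤ π * ρ ^ 2 * (-u z + M / 8 * ρ ^ 2) :=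
    setIntegral_closedBall_le_of_laplacian_le (u := -u) (hu.neg.mono hsub)
      (fun w hw => by
        rw [laplacian_neg, Pi.neg_apply]
        exact neg_le_of_neg_le (neg_le_of_abs_le (hΔ w (hsub hw))))
      hρ.le (by linarith)
  have hmono : ∫ w in closedBall z ρ, u w ≤ ∫ w in closedBall c σ, u w :=
    setIntegral_mono_set ((hu.continuousOn.mono hσsub).integrableOn_compact
      (isCompact_closedBall c σ)) (ae_restrict_of_forall_mem measurableSet_closedBall
        fun w hw => hnonneg w (hσsub hw)) (closedBall_subset_closedBall' (by linarith)).eventuallyLE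
  rw [integral_neg] at hpoint
  have hcompare : ρ ^ 2 * (u z - M / 8 * ρ ^ 2) ≤ σ ^ 2 * (u c + M / 8 * σ ^ 2) :=
    le_of_mul_le_mul_left (by linarith) pi_pos
  calc u z = ρ ^ 2 * (u z - M / 8 * ρ ^ 2) / ρ ^ 2 + M / 8 * ρ ^ 2 := by field
    _ ≤ σ ^ 2 * (u c + M / 8 * σ ^ 2) / ρ ^ 2 + M / 8 * ρ ^ 2 := by gcongr
    _ = (σ / ρ) ^ 2 * (u c + M / 8 * σ ^ 2) + M / 8 * ρ ^ 2 := by ring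

end Disk

/-- Harnack-type lower bound: for every `M ≥ 0` and `r ∈ (0,1)` there is `K ≥ 0`
such that any function on the unit disk that is bounded above by `M`, has Laplacian
bounded by `M` in absolute value, and satisfies `h(0) ≥ −M`, is bounded below by
`−K` on the closed disk of radius `r`. -/
theorem stmt_11 (M : ℝ) (hM : 0 ≤ M) (r : ℝ) (hr : r ∈ Set.Ioo (0:ℝ) 1) :
    ∃ K : ℝ, 0 ≤ K ∧
      ∀ h : ℂ → ℝ,
        ContDiffOn ℝ 2 h (Metric.ball (0:ℂ) 1) →
        (∀ z : ℂ, ‖z‖ < 1 → h z ≤ M) →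
        (∀ z : ℂ, ‖z‖ < 1 →
          |fderiv ℝ (fun w => fderiv ℝ h w 1) z 1
            + fderiv ℝ (fun w => fderiv ℝ h w Complex.I) z Complex.I| ≤ M) →
        -M ≤ h 0 →
        ∀ z : ℂ, ‖z‖ ≤ r → -K ≤ h z := by
  obtain ⟨hr₀, hr₁⟩ := hr
  set ρ := (1 - r) / 2 with hρ
  set σ := (1 + r) / 2 with hσ
  have hρ₀ : 0 < ρ := by linarith
  refine ⟨(σ / ρ) ^ 2 * (2 * M + M / 8 * σ ^ 2) + M / 8 * ρ ^ 2, by positivity,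
    fun h hh hle hlap h₀ z hz => ?_⟩
  have hmem {w : ℂ} (hw : w ∈ ball (0 : ℂ) 1) : ‖w‖ < 1 := mem_ball_zero_iff.mp hw
  have hDh : DifferentiableOn ℝ (fderiv ℝ h) (ball 0 1) :=
    (hh.fderiv_of_isOpen (m := 1) isOpen_ball (by norm_num)).differentiableOn one_ne_zero
  have hΔ (w : ℂ) (hw : w ∈ ball 0 1) : |Δ (fun w => M - h w) w| ≤ M := by
    have hnhds := isOpen_ball.mem_nhds hw
    rw [laplacian_const_sub (hh.contDiffAt hnhds), abs_neg,
      laplacian_eq_fderiv_fderiv_apply (hDh.differentiableAt hnhds)]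
    exact hlap w (hmem hw)
  have hharnack := harnack_of_abs_laplacian_le (c := 0) (z := z) (contDiffOn_const.sub hh)
    (fun w hw => sub_nonneg.mpr (hle w (hmem hw))) hΔ hρ₀
    (show dist z 0 + ρ ≤ σ by rw [dist_zero_right]; linarith) (by linarith)
  have hcenter : M - h 0 ≤ 2 * M := by linarith
  have hbound : M - h z ≤ (σ / ρ) ^ 2 * (2 * M + M / 8 * σ ^ 2) + M / 8 * ρ ^ 2 :=
    hharnack.trans (by gcongr)
  linarith
end
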